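/- arXiv:0805.4126 — 3 statements merged into one kernel-verified Lean document; each statement's English description precedes it below -/
import Mathlib

section
/- Let n ≥ 3 and let Λ be a generic configuration of l lines in ℙⁿ(ℂ), i.e., the weight vector with l₁ = l and all other entries zero. (i) Λ is feasible (generically some rational normal curve meets each line in exactly 2 points) in the following cases: n = 3 and l ≤ 6; or n > 3 and l ≤ ⌊n/2⌋ + 2. (ii) Λ is non-feasible (generically no rational normal curve meets every line in 2 points) in the following cases: n = 3 and l ≥ 7; n = 5 and l ≥ 6; n = 7 and l ≥ 7; or n > 3 with n ≠ 5, n ≠ 7 and l ≥ ⌊n/2⌋ + 3. -/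
/-!
Fix chord parameters: an invertible `M` defining the curve, two points of contact per line and a
change of basis of each line. This is a polynomial map to the tuples of `(n + 1) × 2` matrices, and
a tuple spans chords of a common rational normal curve exactly when it is a value of the map.

*Non-feasibility.* Reparametrizing `ℙ¹` and rescaling `M` normalizes three parameters, so `l`
generic lines are not chords as soon as `(n + 1) ^ 2 + 4 l + 2 l - 3 < 2 (n + 1) l`. The remaining
case is `n = 4`, `l = 5`: containing the curve and five of its chords imposes `9 + 5 < 15`
conditions on quadrics of `ℙ⁴`, whereas five generic lines lie on no quadric.

*Feasibility.* By Chevalley's theorem it suffices that the differential is surjective at one point.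
At `M = 1` a covector annihilating its image is a family of polynomials of degree at most `n`, one
for each point of contact `t`, with a double root at `t`, a root at its partner, and vanishing sums
weighted by `t ^ k`, `k ≤ n`. For `n + 2 < 2 l ≤ n + 4` Lagrange interpolation writes the polynomial
at `t` as a multiple of `(X - t) ^ 2 K` with a common `K`, which vanishes at all points of contact.
For `n = 3`, `l = 6` the lines are the edges of a hexagon inscribed in a twisted cubic, and the
covector is killed vertex by vertex.
-/

noncomputable section

/-- Projective space `ℙⁿ(ℂ)`, the projectivization of `ℂ^{n+1}`. -/
abbrev PP (k : ℕ) := Projectivization ℂ (Fin (k + 1) → ℂ)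

/-- The vector of the monomials `s^k t^(n-k)`, used to parametrize rational normal curves. -/
def veron (n : ℕ) (v : Fin 2 → ℂ) : Fin (n + 1) → ℂ :=
  fun k => v 0 ^ (k : ℕ) * v 1 ^ (n - (k : ℕ))

/-- `C ⊆ ℙⁿ` is a rational normal curve if it is the image of `[s:t] ↦ [F₀(s,t):⋯:Fₙ(s,t)]`
for a basis `F₀,…,Fₙ` of the degree-`n` binary forms; such a basis is encoded by an
invertible matrix of coefficients applied to the monomial vector `veron`. -/
def IsRNC (n : ℕ) (C : Set (PP n)) : Prop :=
  ∃ M : Matrix (Fin (n + 1)) (Fin (n + 1)) ℂ, IsUnit M.det ∧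
    C = {P : PP n | ∃ v : Fin 2 → ℂ, v ≠ 0 ∧ ∃ c : ℂ, c ≠ 0 ∧
      P.rep = c • M.mulVec (veron n v)}

/-- The linear subspace of `ℙⁿ` given as the projectivization of the column span of a matrix. -/
def projSet {n m : ℕ} (A : Matrix (Fin (n + 1)) (Fin m) ℂ) : Set (PP n) :=
  {P : PP n | P.rep ∈ Submodule.span ℂ (Set.range fun j => fun r => A r j)}

/-- A configuration of weight `L = (l₀,…,l_{n-2})`: for each `i`, `lᵢ` matrices of size
`(n+1) × (i+1)`, whose column spans give the `i`-dimensional components. -/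
abbrev Config (n : ℕ) (L : Fin (n - 1) → ℕ) :=
  (i : Fin (n - 1)) → Fin (L i) → Matrix (Fin (n + 1)) (Fin (i.1 + 1)) ℂ

/-- All matrices of the configuration have full rank. -/
def FullRank {n : ℕ} {L : Fin (n - 1) → ℕ} (A : Config n L) : Prop :=
  ∀ i j, (A i j).rank = i.1 + 1

/-- A curve `C` maximally intersects the configuration `A`: it meets every `i`-dimensional
component in exactly `i+1` distinct points. -/
def MaxIntersects {n : ℕ} {L : Fin (n - 1) → ℕ} (C : Set (PP n)) (A : Config n L) : Prop :=
  ∀ i j, (C ∩ projSet (A i j)).ncard = i.1 + 1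

/-- A property `Q` holds for a generic configuration of weight `L`: there is a nonzero
polynomial in the matrix entries such that `Q` holds at every full-rank tuple of matrices
where the polynomial does not vanish. -/
def GenHolds (n : ℕ) (L : Fin (n - 1) → ℕ) (Q : Config n L → Prop) : Prop :=
  ∃ F : MvPolynomial ((i : Fin (n - 1)) × (Fin (L i) × Fin (n + 1) × Fin (i.1 + 1))) ℂ,
    F ≠ 0 ∧ ∀ A : Config n L, FullRank A →
      MvPolynomial.eval (fun p => A p.1 p.2.1 p.2.2.1 p.2.2.2) F ≠ 0 → Q A

/-- `L` is feasible: a generic configuration of weight `L` is maximally intersected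
by some rational normal curve. -/
def Feasible (n : ℕ) (L : Fin (n - 1) → ℕ) : Prop :=
  GenHolds n L fun A => ∃ C : Set (PP n), IsRNC n C ∧ MaxIntersects C A

/-- `L` is non-feasible: for a generic configuration of weight `L`, no rational normal
curve maximally intersects it. -/
def NonFeasible (n : ℕ) (L : Fin (n - 1) → ℕ) : Prop :=
  GenHolds n L fun A => ¬ ∃ C : Set (PP n), IsRNC n C ∧ MaxIntersects C A

section PolynomialMaps

open MvPolynomial

theorem eval_aeval {R σ ι : Type*} [CommSemiring R] (Φ : ι → MvPolynomial σ R) (x : σ → R)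
    (p : MvPolynomial ι R) : eval x (aeval Φ p) = eval (fun i => eval x (Φ i)) p := by
  simpa only [aeval_eq_eval] using comp_aeval_apply Φ (aeval x) p

theorem exists_ne_zero_aeval_eq_zero {K σ ι : Type*} [Field K] [Finite σ] [Finite ι]
    (Φ : ι → MvPolynomial σ K) (hcard : Nat.card σ < Nat.card ι) :
    ∃ F : MvPolynomial ι K, F ≠ 0 ∧ aeval Φ F = 0 := by
  have hdep : ¬ AlgebraicIndependent K Φ := fun hΦ => by
    have hle := hΦ.lift_cardinalMk_le_trdeg
    rw [trdeg_of_isDomain, ← Nat.cast_card, ← Nat.cast_card] at hle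
    simp only [Cardinal.lift_natCast, Nat.cast_le] at hle
    omega
  rw [algebraicIndependent_iff] at hdep
  push Not at hdep
  obtain ⟨F, hF, hF0⟩ := hdep
  exact ⟨F, hF0, hF⟩

theorem exists_ne_zero_vanishing_of_card_lt {K σ ι : Type*} [Field K] [Finite σ]
    [Finite ι] (Φ : ι → MvPolynomial σ K) (S : Finset σ) (c : σ → K)
    (hcard : Nat.card σ < Nat.card ι + S.card) :
    ∃ F : MvPolynomial ι K, F ≠ 0 ∧
      ∀ x : σ → K, (∀ s ∈ S, x s = c s) → eval (fun i => eval x (Φ i)) F = 0 := by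
  classical
  let freeze : σ → MvPolynomial {s // s ∉ S} K :=
    fun s => if h : s ∈ S then C (c s) else X ⟨s, h⟩
  have hfree : Nat.card {s // s ∉ S} < Nat.card ι := by
    have := Fintype.ofFinite σ
    have hle := S.card_le_univ
    rw [Nat.card_eq_fintype_card] at hcard ⊢
    rw [Fintype.card_subtype_compl, Fintype.card_coe]
    omega
  obtain ⟨F, hF, hvanish⟩ := exists_ne_zero_aeval_eq_zero (fun i => aeval freeze (Φ i)) hfree
  refine ⟨F, hF, fun x hx => ?_⟩
  have hfreeze : (fun s => eval (fun t : {s // s ∉ S} => x t) (freeze s)) = x := by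
    funext s
    by_cases hs : s ∈ S
    · simp [freeze, hs, hx s hs]
    · simp [freeze, hs]
  simpa only [eval_aeval, hfreeze, map_zero] using
    congrArg (eval fun t : {s // s ∉ S} => x t) hvanish

theorem hasStrictFDerivAt_eval {𝕜 σ : Type*} [NontriviallyNormedField 𝕜] [Fintype σ]
    (p : MvPolynomial σ 𝕜) (x : σ → 𝕜) :
    HasStrictFDerivAt (fun y => eval y p)
      (∑ s, eval x (pderiv s p) • (ContinuousLinearMap.proj s : (σ → 𝕜) →L[𝕜] 𝕜)) x := by
  classical
  induction p using MvPolynomial.induction_on with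
  | C a =>
    simp only [eval_C]
    refine (hasStrictFDerivAt_const a x).congr_fderiv ?_
    ext v
    simp
  | add p q hp hq =>
    simp only [map_add]
    refine (hp.fun_add hq).congr_fderiv ?_
    ext v
    simp [add_mul, Finset.sum_add_distrib]
  | mul_X p t hp =>
    simp only [map_mul, eval_X]
    refine (hp.fun_mul (hasStrictFDerivAt_apply t x)).congr_fderiv ?_
    ext v
    simp [pderiv_X, Pi.single_apply, apply_ite (eval x), Finset.mul_sum, add_mul,
      Finset.sum_add_distrib, mul_assoc]

theorem algebraicIndependent_of_linearIndependent_pderiv {𝕜 σ ι : Type*}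
    [NontriviallyNormedField 𝕜] [CompleteSpace 𝕜] [Finite σ] [Finite ι]
    (Φ : ι → MvPolynomial σ 𝕜) (x : σ → 𝕜)
    (hΦ : LinearIndependent 𝕜 fun i s => eval x (pderiv s (Φ i))) :
    AlgebraicIndependent 𝕜 Φ := by
  have := Fintype.ofFinite σ
  have := Fintype.ofFinite ι
  let J : Matrix ι σ 𝕜 := .of fun i s => eval x (pderiv s (Φ i))
  have hderiv :
      HasStrictFDerivAt (fun y i => eval y (Φ i)) J.mulVecLin.toContinuousLinearMap x := by
    refine hasStrictFDerivAt_pi'.2 fun i => (hasStrictFDerivAt_eval (Φ i) x).congr_fderiv ?_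
    ext v
    simp [J, Matrix.mulVec, dotProduct]
  have hsurj : J.mulVecLin.range = ⊤ := by
    apply Submodule.eq_top_of_finrank_eq
    rw [Module.finrank_fintype_fun_eq_card]
    exact LinearIndependent.rank_matrix (M := J) hΦ
  rw [algebraicIndependent_iff]
  intro F hF
  have hnhds : {y : ι → 𝕜 | eval y F = 0} ∈ nhds fun i => eval x (Φ i) := by
    rw [← hderiv.map_nhds_eq_of_surj hsurj]
    refine Filter.mem_map.2 (Filter.univ_mem' fun y => ?_)
    exact (eval_aeval Φ y F).symm.trans (by rw [hF, map_zero])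
  obtain ⟨ε, hε, hball⟩ := Metric.mem_nhds_iff.1 hnhds
  refine funext_set (fun i => Metric.ball (eval x (Φ i)) ε)
    (fun i => infinite_of_mem_nhds _ (Metric.ball_mem_nhds _ hε)) fun y hy => ?_
  rw [map_zero]
  rw [ball_pi _ hε] at hball
  exact hball hy

theorem exists_basicOpen_subset_image_comap {A B : Type*} [CommRing A] [IsDomain A] [CommRing B]
    [IsDomain B] {f : A →+* B} (hf : f.FinitePresentation) (hinj : Function.Injective f) {g : B}
    (hg : g ≠ 0) :
    ∃ a : A, a ≠ 0 ∧ (PrimeSpectrum.basicOpen a : Set (PrimeSpectrum A)) ⊆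
      PrimeSpectrum.comap f '' PrimeSpectrum.basicOpen g := by
  obtain ⟨S, hS⟩ := PrimeSpectrum.exists_constructibleSetData_iff.2
    (PrimeSpectrum.isConstructible_comap_image hf
      (PrimeSpectrum.isConstructible_basicOpen (f := g)))
  have hgeneric : (⊥ : PrimeSpectrum A) ∈ S.toSet := by
    rw [hS]
    refine ⟨⊥, fun h => hg h, ?_⟩
    ext a
    exact map_eq_zero_iff f hinj
  simp only [PrimeSpectrum.ConstructibleSetData.toSet, Set.mem_iUnion] at hgeneric hS
  obtain ⟨C, hCS, hzero, hC⟩ := hgeneric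
  refine ⟨C.f, fun h => hC ?_, fun x hx => ?_⟩
  · simp [h]
  · rw [← hS]
    refine Set.mem_iUnion₂.2 ⟨C, hCS, ?_, ?_⟩
    · refine fun a ha => ?_
      have : a = 0 := hzero ha
      simp [this]
    · simpa using hx

theorem exists_ne_zero_of_algebraicIndependent {K σ ι : Type*} [Field K] [IsAlgClosed K]
    [Finite σ] [Finite ι] {Φ : ι → MvPolynomial σ K} (hΦ : AlgebraicIndependent K Φ)
    {g : MvPolynomial σ K} (hg : g ≠ 0) :
    ∃ F : MvPolynomial ι K, F ≠ 0 ∧ ∀ y : ι → K, eval y F ≠ 0 →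
      ∃ x : σ → K, eval x g ≠ 0 ∧ ∀ i, eval x (Φ i) = y i := by
  have hfp : (aeval Φ : MvPolynomial ι K →ₐ[K] _).toRingHom.FinitePresentation := by
    refine .of_finiteType.1 (.of_comp_finiteType (f := algebraMap K (MvPolynomial ι K)) ?_)
    rw [AlgHom.toRingHom_eq_coe, AlgHom.comp_algebraMap]
    exact RingHom.finiteType_algebraMap.2 inferInstance
  obtain ⟨F, hF, hFg⟩ := exists_basicOpen_subset_image_comap hfp hΦ hg
  refine ⟨F, hF, fun y hy => ?_⟩
  let my : PrimeSpectrum (MvPolynomial ι K) := ⟨vanishingIdeal K {y}, inferInstance⟩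
  have hmy : my ∈ PrimeSpectrum.basicOpen F := fun h =>
    hy (by simpa [aeval_eq_eval] using (mem_vanishingIdeal_singleton_iff y F).1 h)
  obtain ⟨P, hgP, hPy⟩ := hFg hmy
  obtain ⟨x, hxP, hxg⟩ : ∃ x ∈ zeroLocus K P.asIdeal, aeval x g ≠ 0 := by
    by_contra! h
    exact hgP (IsPrime.vanishingIdeal_zeroLocus (K := K) P.asIdeal ▸ mem_vanishingIdeal_iff.2 h)
  refine ⟨x, by rwa [← aeval_eq_eval], fun i => ?_⟩
  have hmem : X i - C (y i) ∈ my.asIdeal := (mem_vanishingIdeal_singleton_iff y _).2 (by simp)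
  rw [← hPy] at hmem
  simpa [aeval_eq_eval, sub_eq_zero] using mem_zeroLocus_iff.1 hxP _ hmem

end PolynomialMaps

section GenericLines

/-- The lines spanned by the columns of the matrices `B j` are chords of a common rational normal
curve. -/
def ChordsOfRNC {n : ℕ} {ι : Type} (B : ι → Matrix (Fin (n + 1)) (Fin 2) ℂ) : Prop :=
  ∃ C : Set (PP n), IsRNC n C ∧ ∀ j, (C ∩ projSet (B j)).ncard = 2

/-- `Q` holds for a generic family of lines of `ℙⁿ` indexed by `ι`; the analogue of `GenHolds` for
configurations consisting of lines only. -/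
def GenericLines (n : ℕ) (ι : Type) (Q : (ι → Matrix (Fin (n + 1)) (Fin 2) ℂ) → Prop) : Prop :=
  ∃ F : MvPolynomial (ι × Fin (n + 1) × Fin 2) ℂ, F ≠ 0 ∧
    ∀ B : ι → Matrix (Fin (n + 1)) (Fin 2) ℂ, (∀ j, (B j).rank = 2) →
      MvPolynomial.eval (fun p => B p.1 p.2.1 p.2.2) F ≠ 0 → Q B

theorem GenericLines.comp {n : ℕ} {ι κ : Type} {Q : (κ → Matrix (Fin (n + 1)) (Fin 2) ℂ) → Prop}
    (h : GenericLines n κ Q) (e : κ ↪ ι) : GenericLines n ι fun B => Q (B ∘ e) := by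
  obtain ⟨F, hF, hQ⟩ := h
  let E : κ × Fin (n + 1) × Fin 2 → ι × Fin (n + 1) × Fin 2 := Prod.map e id
  have hE : Function.Injective E := e.injective.prodMap Function.injective_id
  refine ⟨MvPolynomial.rename E F, ?_, fun B hB hev => hQ _ (fun j => hB (e j)) ?_⟩
  · rwa [Ne, map_eq_zero_iff _ (MvPolynomial.rename_injective E hE)]
  · rwa [MvPolynomial.eval_rename] at hev

theorem GenericLines.not_chordsOfRNC_of_embedding {n : ℕ} {ι κ : Type}
    (h : GenericLines n κ fun B => ¬ ChordsOfRNC B) (e : κ ↪ ι) :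
    GenericLines n ι fun B => ¬ ChordsOfRNC B := by
  obtain ⟨F, hF, hB⟩ := h.comp e
  exact ⟨F, hF, fun B hrank hev ⟨C, hC, hchord⟩ =>
    hB B hrank hev ⟨C, hC, fun j => hchord (e j)⟩⟩

theorem genHolds_of_genericLines {n : ℕ} (hn : 1 < n - 1) {L : Fin (n - 1) → ℕ}
    {Q : (Fin (L ⟨1, hn⟩) → Matrix (Fin (n + 1)) (Fin 2) ℂ) → Prop}
    (h : GenericLines n (Fin (L ⟨1, hn⟩)) Q) :
    GenHolds n L fun A : Config n L => Q (A ⟨1, hn⟩) := by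
  obtain ⟨F, hF, hQ⟩ := h
  let E : Fin (L ⟨1, hn⟩) × Fin (n + 1) × Fin 2 →
      (i : Fin (n - 1)) × (Fin (L i) × Fin (n + 1) × Fin (i.1 + 1)) :=
    fun p => ⟨⟨1, hn⟩, p⟩
  have hE : Function.Injective E := fun p q hpq => by simpa [E] using hpq
  refine ⟨MvPolynomial.rename E F, ?_, fun A hA hev => hQ _ (hA ⟨1, hn⟩) ?_⟩
  · rwa [Ne, map_eq_zero_iff _ (MvPolynomial.rename_injective E hE)]
  · rwa [MvPolynomial.eval_rename] at hev

theorem exists_maxIntersects_iff_chordsOfRNC {n : ℕ} (hn : 1 < n - 1) {L : Fin (n - 1) → ℕ}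
    (hL : ∀ i : Fin (n - 1), i.1 ≠ 1 → L i = 0) (A : Config n L) :
    (∃ C : Set (PP n), IsRNC n C ∧ MaxIntersects C A) ↔ ChordsOfRNC (A ⟨1, hn⟩) := by
  refine exists_congr fun C => and_congr_right fun _ => ⟨fun h => h ⟨1, hn⟩, fun h i j => ?_⟩
  by_cases hi : i.1 = 1
  · obtain rfl : i = ⟨1, hn⟩ := Fin.ext hi
    exact h j
  · exact (j.cast (hL i hi)).elim0

theorem feasible_of_genericLines {n : ℕ} (hn : 1 < n - 1) {L : Fin (n - 1) → ℕ}
    (hL : ∀ i : Fin (n - 1), i.1 ≠ 1 → L i = 0)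
    (h : GenericLines n (Fin (L ⟨1, hn⟩)) ChordsOfRNC) : Feasible n L := by
  simpa only [Feasible, exists_maxIntersects_iff_chordsOfRNC hn hL]
    using genHolds_of_genericLines hn h

theorem nonFeasible_of_genericLines {n : ℕ} (hn : 1 < n - 1) {L : Fin (n - 1) → ℕ}
    (hL : ∀ i : Fin (n - 1), i.1 ≠ 1 → L i = 0)
    (h : GenericLines n (Fin (L ⟨1, hn⟩)) fun B => ¬ ChordsOfRNC B) : NonFeasible n L := by
  simpa only [NonFeasible, exists_maxIntersects_iff_chordsOfRNC hn hL]
    using genHolds_of_genericLines hn h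

end GenericLines

section Rank

variable {K m κ : Type*} [Field K] [Fintype κ]

theorem rank_eq_card_iff_linearIndependent_col (A : Matrix m κ K) :
    A.rank = Fintype.card κ ↔ LinearIndependent K A.col := by
  rw [linearIndependent_iff_card_eq_finrank_span, A.rank_eq_finrank_span_cols, eq_comm, Set.finrank]

theorem rank_eq_card_iff_isUnit_det [DecidableEq κ] (A : Matrix κ κ K) :
    A.rank = Fintype.card κ ↔ IsUnit A.det := by
  rw [rank_eq_card_iff_linearIndependent_col, Matrix.linearIndependent_cols_iff_isUnit,
    Matrix.isUnit_iff_isUnit_det]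

theorem linearIndependent_col_of_rank_mul {A : Matrix m κ K} {G : Matrix κ κ K}
    (h : (A * G).rank = Fintype.card κ) : LinearIndependent K A.col :=
  (rank_eq_card_iff_linearIndependent_col A).1
    (le_antisymm A.rank_le_card_width (h.ge.trans (A.rank_mul_le_left G)))

end Rank

section Chords

/-- The matrix whose columns are the vectors of degree-`n` monomials at the points `y c`. -/
def veronMatrix (n : ℕ) {κ : Type} (y : κ → Fin 2 → ℂ) : Matrix (Fin (n + 1)) κ ℂ :=
  .of fun r c => veron n (y c) r

theorem veronMatrix_mulVec (n : ℕ) (y : Fin 2 → Fin 2 → ℂ) (b : Fin 2 → ℂ) :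
    (veronMatrix n y).mulVec b = b 0 • veron n (y 0) + b 1 • veron n (y 1) := by
  ext r
  simp [veronMatrix, Matrix.mulVec, dotProduct, mul_comm]

theorem veron_smul (n : ℕ) (c : ℂ) (v : Fin 2 → ℂ) : veron n (c • v) = c ^ n • veron n v := by
  ext k
  simp only [veron, Pi.smul_apply, smul_eq_mul, mul_pow,
    ← pow_mul_pow_sub c (Nat.lt_succ_iff.1 k.2)]
  ring

theorem veron_zero {n : ℕ} (hn : n ≠ 0) : veron n 0 = 0 := by
  ext k
  simp only [veron, Pi.zero_apply, ← pow_add, Nat.add_sub_of_le (Nat.lt_succ_iff.1 k.2),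
    zero_pow hn]

/-- The determinant of two vectors in the plane; it vanishes exactly when they represent the same
point of `ℙ¹`. -/
def cross (u v : Fin 2 → ℂ) : ℂ := u 0 * v 1 - v 0 * u 1

theorem exists_eq_smul_of_cross_eq_zero {u v : Fin 2 → ℂ} (hv : v ≠ 0)
    (h : cross u v = 0) : ∃ c : ℂ, u = c • v := by
  rw [cross] at h
  by_cases h0 : v 0 = 0
  · have h1 : v 1 ≠ 0 := fun h1 => hv (by ext i; fin_cases i <;> assumption)
    refine ⟨u 1 / v 1, ?_⟩
    ext i
    fin_cases i
    · simpa [h0, h1] using h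
    · simp [h1]
  · refine ⟨u 0 / v 0, ?_⟩
    ext i
    fin_cases i
    · simp [h0]
    · simp only [Fin.mk_one, Pi.smul_apply, smul_eq_mul]
      field_simp
      linear_combination -h

theorem cross_mul_cross_eq_zero_of_veron_eq {n : ℕ} (hn : 2 ≤ n) {u : Fin 2 → ℂ} (hu : u ≠ 0)
    {y : Fin 2 → Fin 2 → ℂ} {b : Fin 2 → ℂ} (h : veron n u = (veronMatrix n y).mulVec b) :
    cross u (y 0) * cross u (y 1) = 0 := by
  obtain ⟨m, rfl⟩ := Nat.exists_eq_add_of_le' hn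
  let q : (Fin (m + 3) → ℂ) → Fin (m + 1) → ℂ := fun x k =>
    x (k.succ.succ) * (y 0 1 * y 1 1) - x k.succ.castSucc * (y 0 0 * y 1 1 + y 1 0 * y 0 1)
      + x (k.castSucc.castSucc) * (y 0 0 * y 1 0)
  have hq : ∀ v k, q (veron (m + 2) v) k = v 0 ^ (k : ℕ) * v 1 ^ (m - k) *
      (cross v (y 0) * cross v (y 1)) := by
    intro v k
    obtain ⟨d, hd⟩ := Nat.exists_eq_add_of_le (Nat.lt_succ_iff.1 k.2)
    have e0 : m - k.1 = d := by omega
    have e1 : m + 2 - (k.1 + 1) = d + 1 := by omega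
    have e2 : m + 2 - k.1 = d + 2 := by omega
    have e3 : m + 2 - (k.1 + 1 + 1) = d := by omega
    simp only [q, veron, Fin.val_succ, Fin.val_castSucc, cross, e0, e1, e2, e3]
    ring
  have hvanish : ∀ k, q (veron (m + 2) u) k = 0 := by
    intro k
    have : q (veron (m + 2) u) k =
      b 0 * q (veron (m + 2) (y 0)) k + b 1 * q (veron (m + 2) (y 1)) k := by
      simp only [h, veronMatrix_mulVec, q, Pi.add_apply, Pi.smul_apply, smul_eq_mul]
      ring
    simp only [this, hq, cross]
    ring
  contrapose! hu with hne
  have hfirst := (hq u 0).symm.trans (hvanish 0)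
  have hlast := (hq u (Fin.last m)).symm.trans (hvanish (Fin.last m))
  ext i
  fin_cases i
  · exact eq_zero_of_pow_eq_zero (by simpa [hne] using hlast)
  · exact eq_zero_of_pow_eq_zero (by simpa [hne] using hfirst)

theorem mk_mem_projSet {n m : ℕ} {A : Matrix (Fin (n + 1)) (Fin m) ℂ} {w : Fin (n + 1) → ℂ}
    (hw : w ≠ 0) : Projectivization.mk ℂ w hw ∈ projSet A ↔ ∃ a, A.mulVec a = w := by
  obtain ⟨c, hc⟩ := Projectivization.exists_smul_eq_mk_rep ℂ w hw
  have hrange : projSet A = {P : PP n | P.rep ∈ A.mulVecLin.range} := by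
    rw [A.range_mulVecLin]; rfl
  rw [hrange, Set.mem_ofPred_eq, ← hc, Units.smul_def, Submodule.smul_mem_iff _ c.ne_zero]
  rfl

/-- The rational normal curve parametrized by the binary forms whose coefficients are the rows of
`M`. -/
def paramCurve {n : ℕ} (M : Matrix (Fin (n + 1)) (Fin (n + 1)) ℂ) : Set (PP n) :=
  {P : PP n | ∃ v : Fin 2 → ℂ, v ≠ 0 ∧ ∃ c : ℂ, c ≠ 0 ∧ P.rep = c • M.mulVec (veron n v)}

theorem mem_paramCurve {n : ℕ} {M : Matrix (Fin (n + 1)) (Fin (n + 1)) ℂ} {P : PP n} :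
    P ∈ paramCurve M ↔ ∃ v : Fin 2 → ℂ, v ≠ 0 ∧
      ∃ hv : M.mulVec (veron n v) ≠ 0, P = Projectivization.mk ℂ _ hv := by
  refine exists_congr fun v => and_congr_right fun _ => ⟨fun ⟨c, _, hP⟩ => ?_, fun ⟨hv, hP⟩ => ?_⟩
  · have hv : M.mulVec (veron n v) ≠ 0 := fun h => P.rep_nonzero (by rw [hP, h, smul_zero])
    refine ⟨hv, ?_⟩
    rw [← P.mk_rep, Projectivization.mk_eq_mk_iff']
    exact ⟨c, hP.symm⟩
  · obtain ⟨c, hc⟩ := Projectivization.exists_smul_eq_mk_rep ℂ _ hv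
    exact ⟨c, c.ne_zero, by rw [hP, ← hc, Units.smul_def]⟩

theorem exists_eq_mul_veronMatrix_mul {n : ℕ} {M : Matrix (Fin (n + 1)) (Fin (n + 1)) ℂ}
    {B : Matrix (Fin (n + 1)) (Fin 2) ℂ} (h : (paramCurve M ∩ projSet B).ncard = 2) :
    ∃ (y : Fin 2 → Fin 2 → ℂ) (G : Matrix (Fin 2) (Fin 2) ℂ), B = M * veronMatrix n y * G := by
  obtain ⟨P, Q, hPQ, hset⟩ := Set.ncard_eq_two.1 h
  obtain ⟨hPC, hPB⟩ : P ∈ paramCurve M ∩ projSet B := hset ▸ .inl rfl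
  obtain ⟨hQC, hQB⟩ : Q ∈ paramCurve M ∩ projSet B := hset ▸ .inr rfl
  obtain ⟨v, -, hv, rfl⟩ := mem_paramCurve.1 hPC
  obtain ⟨w, -, hw, rfl⟩ := mem_paramCurve.1 hQC
  obtain ⟨a, ha⟩ := (mk_mem_projSet hv).1 hPB
  obtain ⟨b, hb⟩ := (mk_mem_projSet hw).1 hQB
  let A : Matrix (Fin 2) (Fin 2) ℂ := .of fun r c => ![a, b] c r
  have hBA : B * A = M * veronMatrix n ![v, w] := by
    ext r c
    fin_cases c
    · exact congrFun ha r
    · exact congrFun hb r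
  have hcol : LinearIndependent ℂ (B * A).col := by
    have : (B * A).col = ![M.mulVec (veron n v), M.mulVec (veron n w)] := by
      rw [hBA]
      ext c
      fin_cases c <;> rfl
    rw [this, ← Projectivization.independent_mk_iff_LinearIndependent hv hw]
    exact (Projectivization.independent_pair_iff_ne _ _).2 hPQ
  have hA : IsUnit A.det := by
    rw [← rank_eq_card_iff_isUnit_det]
    exact le_antisymm A.rank_le_card_width
      ((rank_eq_card_iff_linearIndependent_col _).2 hcol ▸ B.rank_mul_le_right A)
  refine ⟨![v, w], A⁻¹, ?_⟩
  rw [← hBA, Matrix.mul_nonsing_inv_cancel_right _ _ hA]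

theorem ne_zero_of_linearIndependent_col {n : ℕ} (hn : n ≠ 0)
    {M : Matrix (Fin (n + 1)) (Fin (n + 1)) ℂ} {y : Fin 2 → Fin 2 → ℂ}
    (h : LinearIndependent ℂ (M * veronMatrix n y).col) (a : Fin 2) : y a ≠ 0 := fun hy =>
  h.ne_zero a (show M.mulVec (veron n (y a)) = 0 by rw [hy, veron_zero hn, M.mulVec_zero])

theorem ncard_paramCurve_inter_projSet {n : ℕ} (hn : 2 ≤ n)
    {M : Matrix (Fin (n + 1)) (Fin (n + 1)) ℂ} (hM : IsUnit M.det) {y : Fin 2 → Fin 2 → ℂ}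
    {G : Matrix (Fin 2) (Fin 2) ℂ} (hrank : (M * veronMatrix n y * G).rank = 2) :
    (paramCurve M ∩ projSet (M * veronMatrix n y * G)).ncard = 2 := by
  have hG : IsUnit G.det := by
    rw [← rank_eq_card_iff_isUnit_det]
    exact le_antisymm G.rank_le_card_width (hrank.ge.trans (Matrix.rank_mul_le_right _ G))
  have hind := linearIndependent_col_of_rank_mul hrank
  have hne : ∀ c, M.mulVec (veron n (y c)) ≠ 0 := hind.ne_zero
  have hy := ne_zero_of_linearIndependent_col (by omega) hind
  let P : Fin 2 → PP n := fun c => Projectivization.mk ℂ _ (hne c)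
  have hP : Function.Injective P := by
    refine fun c d hcd => ?_
    obtain ⟨a, ha⟩ := (Projectivization.mk_eq_mk_iff' ..).1 hcd
    exact hind.eq_of_smul_apply_eq_smul_apply 1 a c d one_ne_zero ((one_smul ..).trans ha.symm)
  have hset : paramCurve M ∩ projSet (M * veronMatrix n y * G) = Set.range P := by
    ext Q
    constructor
    · rintro ⟨hQ, hQB⟩
      obtain ⟨u, hu, hMu, rfl⟩ := mem_paramCurve.1 hQ
      obtain ⟨a, ha⟩ := (mk_mem_projSet hMu).1 hQB
      have hspan : veron n u = (veronMatrix n y).mulVec (G.mulVec a) := by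
        apply Matrix.mulVec_injective_of_isUnit ((Matrix.isUnit_iff_isUnit_det M).2 hM)
        simp only [← ha, Matrix.mulVec_mulVec, Matrix.mul_assoc]
      obtain ⟨c, k, hk⟩ : ∃ c, ∃ k : ℂ, u = k • y c := by
        rcases mul_eq_zero.1 (cross_mul_cross_eq_zero_of_veron_eq hn hu hspan) with h | h
        exacts [⟨0, exists_eq_smul_of_cross_eq_zero (hy 0) h⟩,
          ⟨1, exists_eq_smul_of_cross_eq_zero (hy 1) h⟩]
      refine ⟨c, .symm ((Projectivization.mk_eq_mk_iff' ..).2 ⟨k ^ n, ?_⟩)⟩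
      rw [hk, veron_smul, Matrix.mulVec_smul]
    · rintro ⟨c, rfl⟩
      refine ⟨mem_paramCurve.2 ⟨y c, hy c, hne c, rfl⟩,
        (mk_mem_projSet (hne c)).2 ⟨G⁻¹.mulVec (Pi.single c 1), ?_⟩⟩
      rw [Matrix.mulVec_mulVec, Matrix.mul_nonsing_inv_cancel_right _ _ hG,
        Matrix.mulVec_single_one]
      rfl
  rw [hset, Set.ncard_range_of_injective hP, Nat.card_fin]

theorem chordsOfRNC_iff {n : ℕ} (hn : 2 ≤ n) {ι : Type} {B : ι → Matrix (Fin (n + 1)) (Fin 2) ℂ}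
    (hB : ∀ j, (B j).rank = 2) :
    ChordsOfRNC B ↔ ∃ M : Matrix (Fin (n + 1)) (Fin (n + 1)) ℂ, IsUnit M.det ∧
      ∃ (y : ι → Fin 2 → Fin 2 → ℂ) (G : ι → Matrix (Fin 2) (Fin 2) ℂ),
        ∀ j, B j = M * veronMatrix n (y j) * G j := by
  constructor
  · rintro ⟨_, ⟨M, hM, rfl⟩, hchord⟩
    choose y G hB using fun j => exists_eq_mul_veronMatrix_mul (hchord j)
    exact ⟨M, hM, y, G, hB⟩
  · rintro ⟨M, hM, y, G, hfactor⟩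
    refine ⟨_, ⟨M, hM, rfl⟩, fun j => ?_⟩
    rw [hfactor]
    exact ncard_paramCurve_inter_projSet hn hM (hfactor j ▸ hB j)

end Chords

section NormalForm

open MvPolynomial in
theorem exists_dotProduct_veron_eq_eval {n : ℕ} {p : MvPolynomial (Fin 2) ℂ}
    (hp : p.IsHomogeneous n) : ∃ s : Fin (n + 1) → ℂ, ∀ y, eval y p = s ⬝ᵥ veron n y := by
  have hspan : (fun y => eval y p) ∈ Submodule.span ℂ (Set.range fun k y => veron n y k) := by
    have hsum : (fun y => eval y p) =
        ∑ d ∈ p.support, coeff d p • fun y : Fin 2 → ℂ => y 0 ^ d 0 * y 1 ^ d 1 := by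
      ext y
      simp [eval_eq', Fin.prod_univ_two]
    rw [hsum]
    refine Submodule.sum_mem _ fun d hd => Submodule.smul_mem _ _ (Submodule.subset_span ?_)
    have hdeg : d 0 + d 1 = n := by
      simpa [Finsupp.weight_apply, Finsupp.sum_fintype] using hp (mem_support_iff.1 hd)
    refine ⟨⟨d 0, by omega⟩, funext fun y => ?_⟩
    simp [veron, ← hdeg]
  obtain ⟨s, hs⟩ := (Submodule.mem_span_range_iff_exists_fun ℂ).1 hspan
  refine ⟨s, fun y => (congrFun hs y).symm.trans ?_⟩
  simp [dotProduct]

open MvPolynomial in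
theorem exists_veron_mulVec_eq (n : ℕ) (N : Matrix (Fin 2) (Fin 2) ℂ) :
    ∃ S : Matrix (Fin (n + 1)) (Fin (n + 1)) ℂ,
      ∀ y, veron n (N.mulVec y) = S.mulVec (veron n y) := by
  let form : Fin 2 → MvPolynomial (Fin 2) ℂ := fun i => C (N i 0) * X 0 + C (N i 1) * X 1
  have hform : ∀ i, (form i).IsHomogeneous 1 := fun i =>
    (isHomogeneous_C_mul_X _ _).add (isHomogeneous_C_mul_X _ _)
  have hmonomial : ∀ k : Fin (n + 1), (form 0 ^ (k : ℕ) * form 1 ^ (n - k)).IsHomogeneous n := by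
    intro k
    have := ((hform 0).pow k).mul ((hform 1).pow (n - k))
    rwa [one_mul, one_mul, Nat.add_sub_of_le (Nat.lt_succ_iff.1 k.2)] at this
  choose S hS using fun k => exists_dotProduct_veron_eq_eval (hmonomial k)
  refine ⟨S, fun y => funext fun k => Eq.trans ?_ (hS k y)⟩
  simp [veron, form, Matrix.mulVec, dotProduct, Fin.sum_univ_two]

theorem veronMatrix_mulVec_points {n : ℕ} {N : Matrix (Fin 2) (Fin 2) ℂ}
    {S : Matrix (Fin (n + 1)) (Fin (n + 1)) ℂ}
    (hS : ∀ y, veron n (N.mulVec y) = S.mulVec (veron n y)) (y : Fin 2 → Fin 2 → ℂ) :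
    veronMatrix n (fun a => N.mulVec (y a)) = S * veronMatrix n y := by
  ext r a
  exact congrFun (hS (y a)) r

theorem veronMatrix_smul (n : ℕ) (d : Fin 2 → ℂ) (y : Fin 2 → Fin 2 → ℂ) :
    veronMatrix n (fun a => d a • y a) = veronMatrix n y * Matrix.diagonal fun a => d a ^ n := by
  ext r a
  simp [veronMatrix, veron_smul, mul_comm]

theorem veron_one_zero (n : ℕ) : veron n ![1, 0] = Pi.single (Fin.last n) 1 := by
  ext k
  rcases eq_or_ne k (Fin.last n) with rfl | hk
  · simp [veron]
  · have : n - (k : ℕ) ≠ 0 := by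
      have := Fin.val_lt_last hk
      omega
    simp [veron, hk, this]

open Polynomial in
theorem exists_dotProduct_veron_ne_zero {n : ℕ} {κ : Type} [Finite κ] {y : κ → Fin 2 → ℂ}
    (hy : ∀ i, y i ≠ 0) {m : Fin (n + 1) → ℂ} (hm : m ≠ 0) :
    ∃ e : Fin 2 → ℂ, m ⬝ᵥ veron n e ≠ 0 ∧ ∀ i, cross e (y i) ≠ 0 := by
  have := Fintype.ofFinite κ
  let f : ℂ[X] := ∑ k : Fin (n + 1), C (m k) * X ^ (k : ℕ)
  let g : κ → ℂ[X] := fun i => C (y i 1) * X - C (y i 0)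
  have hf : f ≠ 0 := by
    contrapose! hm
    ext k
    simpa [f, finsetSum_coeff, coeff_X_pow, Fin.val_inj] using congrArg (coeff · k) hm
  have hg : ∀ i, g i ≠ 0 := by
    intro i hi
    refine hy i (funext fun a => ?_)
    fin_cases a
    · simpa [g] using congrArg (coeff · 0) hi
    · simpa [g] using congrArg (coeff · 1) hi
  obtain ⟨t, ht⟩ : ∃ t, (f * ∏ i, g i).eval t ≠ 0 := by
    by_contra! h
    exact mul_ne_zero hf (Finset.prod_ne_zero_iff.2 fun i _ => hg i)
      (funext fun t => by rw [h, eval_zero])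
  rw [eval_mul, eval_prod, mul_ne_zero_iff, Finset.prod_ne_zero_iff] at ht
  refine ⟨![t, 1], ?_, fun i => ?_⟩
  · simpa [f, eval_finsetSum, dotProduct, veron] using ht.1
  · simpa [g, cross, mul_comm t] using ht.2 i (Finset.mem_univ i)

theorem exists_affine_coordinates {e p q : Fin 2 → ℂ} (hp : cross e p ≠ 0) (hq : cross e q ≠ 0)
    (hpq : cross p q ≠ 0) :
    ∃ (N : Matrix (Fin 2) (Fin 2) ℂ) (s d : (Fin 2 → ℂ) → ℂ), N.mulVec ![1, 0] = e ∧
      (∀ u, cross e u ≠ 0 → u = d u • N.mulVec ![s u, 1]) ∧ s p = 0 ∧ s q = 1 := by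
  let β : ℂ := -cross e q / cross p q
  have hβ : β ≠ 0 := div_ne_zero (neg_ne_zero.2 hq) hpq
  refine ⟨!![e 0, β * p 0; e 1, β * p 1], fun u => β * cross u p / cross e u,
    fun u => cross e u / (β * cross e p), ?_, fun u hu => ?_, ?_, ?_⟩
  · ext i
    fin_cases i <;> simp
  · ext i
    fin_cases i
    · simp only [Fin.zero_eta, Matrix.mulVec_cons, one_smul, Matrix.mulVec_empty, add_zero,
        Pi.smul_apply, Pi.add_apply, Function.comp_apply, Matrix.cons_val_zero, Matrix.head_cons,
        smul_eq_mul, Matrix.tail_cons, Fin.isValue, Nat.succ_eq_add_one, Nat.reduceAdd]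
      field_simp
      simp only [cross]
      ring
    · simp only [Fin.mk_one, Matrix.mulVec_cons, one_smul, Matrix.mulVec_empty, add_zero,
        Pi.smul_apply, Pi.add_apply, Function.comp_apply, Matrix.cons_val_one,
        Matrix.cons_val_fin_one, Matrix.head_cons, smul_eq_mul, Matrix.tail_cons, Fin.isValue,
        Nat.succ_eq_add_one, Nat.reduceAdd]
      field_simp
      simp only [cross]
      ring
  · simp [cross]
  · simp only [β]
    field_simp
    simp [cross]

theorem cross_ne_zero_of_linearIndependent_col {n : ℕ} (hn : n ≠ 0)
    {M : Matrix (Fin (n + 1)) (Fin (n + 1)) ℂ} {y : Fin 2 → Fin 2 → ℂ}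
    (h : LinearIndependent ℂ (M * veronMatrix n y).col) : cross (y 0) (y 1) ≠ 0 := by
  intro hcross
  obtain ⟨c, hc⟩ :=
    exists_eq_smul_of_cross_eq_zero (ne_zero_of_linearIndependent_col hn h 1) hcross
  have hdep : (1 : ℂ) • M.mulVec (veron n (y 0)) = c ^ n • M.mulVec (veron n (y 1)) := by
    rw [hc, veron_smul, Matrix.mulVec_smul, one_smul]
  exact zero_ne_one (h.eq_of_smul_apply_eq_smul_apply 1 _ 0 1 one_ne_zero hdep)

theorem exists_normalized_factorization {n : ℕ} (hn : n ≠ 0) {ι : Type} [Finite ι] (j₀ : ι)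
    {M : Matrix (Fin (n + 1)) (Fin (n + 1)) ℂ} (hM : IsUnit M.det) (y : ι → Fin 2 → Fin 2 → ℂ)
    (G : ι → Matrix (Fin 2) (Fin 2) ℂ) (hrank : ∀ j, (M * veronMatrix n (y j) * G j).rank = 2) :
    ∃ (M' : Matrix (Fin (n + 1)) (Fin (n + 1)) ℂ) (s : ι → Fin 2 → ℂ)
      (G' : ι → Matrix (Fin 2) (Fin 2) ℂ),
      (∀ j, M * veronMatrix n (y j) * G j = M' * veronMatrix n (fun a => ![s j a, 1]) * G' j) ∧
        M' 0 (Fin.last n) = 1 ∧ s j₀ 0 = 0 ∧ s j₀ 1 = 1 := by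
  have hind j := linearIndependent_col_of_rank_mul (hrank j)
  have hrow : M 0 ≠ 0 := fun h =>
    hM.ne_zero (Matrix.det_eq_zero_of_row_eq_zero 0 fun k => congrFun h k)
  obtain ⟨e, he, hcross⟩ := exists_dotProduct_veron_ne_zero (y := fun i : ι × Fin 2 => y i.1 i.2)
    (fun i => ne_zero_of_linearIndependent_col hn (hind i.1) i.2) hrow
  obtain ⟨N, s, d, hN, hcoord, hs0, hs1⟩ := exists_affine_coordinates (hcross (j₀, 0))
    (hcross (j₀, 1)) (cross_ne_zero_of_linearIndependent_col hn (hind j₀))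
  obtain ⟨S, hS⟩ := exists_veron_mulVec_eq n N
  let c := (M * S) 0 (Fin.last n)
  have hc : c ≠ 0 := by
    have hlast : (M * S).mulVec (veron n ![1, 0]) 0 = c := by
      rw [veron_one_zero, Matrix.mulVec_single_one]
      rfl
    rw [← hlast, ← Matrix.mulVec_mulVec, ← hS, hN]
    exact he
  refine ⟨c⁻¹ • (M * S), fun j a => s (y j a),
    fun j => c • (Matrix.diagonal (fun a => d (y j a) ^ n) * G j), fun j => ?_,
    inv_mul_cancel₀ hc, hs0, hs1⟩
  have hpoints : veronMatrix n (y j) = S * veronMatrix n (fun a => ![s (y j a), 1]) *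
      Matrix.diagonal fun a => d (y j a) ^ n := by
    rw [← veronMatrix_mulVec_points hS, ← veronMatrix_smul]
    exact congrArg _ (funext fun a => hcoord _ (hcross (j, a)))
  rw [hpoints, Matrix.smul_mul, Matrix.smul_mul, Matrix.mul_smul, inv_smul_smul₀ hc]
  simp only [Matrix.mul_assoc]

end NormalForm

section DimensionCount

open MvPolynomial

/-- The coordinates of a family of chords of a parametrized rational normal curve: the entries of a
coefficient matrix `M`, the entries of `2 × 2` matrices `G j` and the affine coordinates `s j a` of
the points of contact. The `j`-th chord is spanned by the columns of
`M * veronMatrix n (fun a => ![s j a, 1]) * G j`. -/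
abbrev ChordParam (n : ℕ) (ι : Type) : Type :=
  (Fin (n + 1) × Fin (n + 1)) ⊕ ((ι × Fin 2 × Fin 2) ⊕ (ι × Fin 2))

section Param

variable {n : ℕ} {ι : Type}

/-- The point of the chord parameter space with the given coordinates. -/
def chordParam (M : Matrix (Fin (n + 1)) (Fin (n + 1)) ℂ) (G : ι → Matrix (Fin 2) (Fin 2) ℂ)
    (s : ι → Fin 2 → ℂ) : ChordParam n ι → ℂ :=
  Sum.elim (fun p => M p.1 p.2) (Sum.elim (fun p => G p.1 p.2.1 p.2.2) fun p => s p.1 p.2)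

section

variable (M : Matrix (Fin (n + 1)) (Fin (n + 1)) ℂ) (G : ι → Matrix (Fin 2) (Fin 2) ℂ)
  (s : ι → Fin 2 → ℂ)

@[simp]
theorem chordParam_curve (r k : Fin (n + 1)) : chordParam M G s (.inl (r, k)) = M r k := rfl

@[simp]
theorem chordParam_frame (j : ι) (a c : Fin 2) :
    chordParam M G s (.inr (.inl (j, a, c))) = G j a c := rfl

@[simp]
theorem chordParam_contact (j : ι) (a : Fin 2) : chordParam M G s (.inr (.inr (j, a))) = s j a :=
  rfl

end

/-- The entries of the matrices spanning the chords, as polynomials in the chord parameters. -/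
def chordPoly (p : ι × Fin (n + 1) × Fin 2) : MvPolynomial (ChordParam n ι) ℂ :=
  ∑ a, (∑ k : Fin (n + 1), X (.inl (p.2.1, k)) * X (.inr (.inr (p.1, a))) ^ (k : ℕ)) *
    X (.inr (.inl (p.1, a, p.2.2)))

theorem eval_chordPoly (M : Matrix (Fin (n + 1)) (Fin (n + 1)) ℂ)
    (G : ι → Matrix (Fin 2) (Fin 2) ℂ) (s : ι → Fin 2 → ℂ) (p : ι × Fin (n + 1) × Fin 2) :
    eval (chordParam M G s) (chordPoly p) =
      (M * veronMatrix n (fun a => ![s p.1 a, 1]) * G p.1) p.2.1 p.2.2 := by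
  simp [chordPoly, Matrix.mul_apply, veronMatrix, veron]

end Param

theorem genericLines_not_chordsOfRNC_of_card {n : ℕ} (hn : 2 ≤ n) {ι : Type} [Finite ι]
    (hcard : (n + 1) ^ 2 + 6 * Nat.card ι < 2 * (n + 1) * Nat.card ι + 3) :
    GenericLines n ι fun B => ¬ ChordsOfRNC B := by
  classical
  have := Fintype.ofFinite ι
  rw [Nat.card_eq_fintype_card] at hcard
  obtain ⟨j₀⟩ : Nonempty ι := by
    by_contra h
    rw [not_nonempty_iff] at h
    rw [Fintype.card_eq_zero] at hcard
    nlinarith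
  let corner : ChordParam n ι := .inl (0, Fin.last n)
  let S : Finset (ChordParam n ι) := {corner, .inr (.inr (j₀, 0)), .inr (.inr (j₀, 1))}
  let c : ChordParam n ι → ℂ := Function.update (Pi.single corner 1) (.inr (.inr (j₀, 1))) 1
  have hS : S.card = 3 := Finset.card_eq_three.2 ⟨_, _, _, by simp [corner], by simp [corner],
    by simp, rfl⟩
  obtain ⟨F, hF, hvanish⟩ := exists_ne_zero_vanishing_of_card_lt
    (chordPoly : ι × Fin (n + 1) × Fin 2 → MvPolynomial (ChordParam n ι) ℂ) S c (by
      simp only [Nat.card_eq_fintype_card, Fintype.card_sum, Fintype.card_prod,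
        Fintype.card_fin, hS]
      linarith)
  refine ⟨F, hF, fun B hB hev hchord => hev ?_⟩
  obtain ⟨M, hM, y, G, hfactor⟩ := (chordsOfRNC_iff hn hB).1 hchord
  obtain ⟨M', s, G', hnormal, hcorner, hs0, hs1⟩ := exists_normalized_factorization (by omega) j₀
    hM y G fun j => hfactor j ▸ hB j
  have hfix : ∀ i ∈ S, chordParam M' G' s i = c i := by
    simp [S, c, corner, hcorner, hs0, hs1]
  have := hvanish (chordParam M' G' s) hfix
  simpa only [eval_chordPoly, ← hnormal, ← hfactor] using this

end DimensionCount

section Quadrics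

open MvPolynomial

section Polar

variable {R σ κ ι : Type*} [CommRing R]

/-- The values at `(u, v)` of the symmetric bilinear forms `z_a w_b + z_b w_a`. A quadric with
coefficient vector `x` has the polar form `x ⬝ᵥ polar u v`. -/
def polar (u v : σ → R) : Sym2 σ → R :=
  Sym2.lift ⟨fun a b => u a * v b + u b * v a, fun _ _ => add_comm _ _⟩

theorem polar_comm (u v : σ → R) : polar u v = polar v u := by
  ext p
  induction p with | _ a b => simp only [polar, Sym2.lift_mk]; ring

theorem polar_add_right (u v w : σ → R) : polar u (v + w) = polar u v + polar u w := by
  ext p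
  induction p with | _ a b => simp only [polar, Sym2.lift_mk, Pi.add_apply]; ring

theorem polar_add_left (u v w : σ → R) : polar (u + v) w = polar u w + polar v w := by
  rw [polar_comm, polar_add_right, polar_comm w, polar_comm w]

theorem polar_single_single [DecidableEq σ] (a b : σ) :
    polar (Pi.single a (1 : R)) (Pi.single b 1) = Pi.single s(a, b) (if a = b then 2 else 1) := by
  ext p
  induction p with
  | _ c d =>
    simp only [polar, Sym2.lift_mk, Pi.single_apply, Sym2.eq_iff]
    split_ifs <;> grind

theorem polar_mulVec (A : Matrix σ (Fin 2) R) (g h : Fin 2 → R) :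
    polar (A.mulVec g) (A.mulVec h) = (g 0 * h 0) • polar (A.col 0) (A.col 0) +
      (g 0 * h 1 + g 1 * h 0) • polar (A.col 0) (A.col 1) +
      (g 1 * h 1) • polar (A.col 1) (A.col 1) := by
  ext p
  induction p with
  | _ a b =>
    simp only [polar, Matrix.mulVec, dotProduct, Fin.sum_univ_two, Sym2.lift_mk, Matrix.col_apply,
      Pi.add_apply, Pi.smul_apply, smul_eq_mul]
    ring

/-- The matrix of the linear conditions on the coefficients of a quadric which say that it contains
the linear spaces spanned by the columns of the matrices `B j`. -/
def quadricConditions (B : ι → Matrix σ κ R) : Matrix (ι × Sym2 κ) (Sym2 σ) R :=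
  .of fun p => p.2.lift
    ⟨fun c d => polar ((B p.1).col c) ((B p.1).col d), fun _ _ => polar_comm _ _⟩

theorem quadricConditions_map {S : Type*} [CommRing S] (f : R →+* S) (B : ι → Matrix σ κ R) :
    (quadricConditions B).map f = quadricConditions fun j => (B j).map f := by
  ext ⟨j, p⟩ q
  induction p with
  | _ c d =>
    induction q with
    | _ a b => simp [quadricConditions, polar]

theorem quadricConditions_mulVec [Fintype (Sym2 σ)] (B : ι → Matrix σ κ R) (x : Sym2 σ → R) (j : ι)
    (c d : κ) : (quadricConditions B).mulVec x (j, s(c, d)) =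
      polar ((B j).col c) ((B j).col d) ⬝ᵥ x := rfl

end Polar

theorem exists_polar_veron_eq {n : ℕ} (M : Matrix (Fin (n + 1)) (Fin (n + 1)) ℂ) :
    ∃ S : Matrix (Fin (2 * n + 1)) (Sym2 (Fin (n + 1))) ℂ,
      ∀ y, polar (M.mulVec (veron n y)) (M.mulVec (veron n y)) =
        Matrix.vecMul (veron (2 * n) y) S := by
  let form : Fin (n + 1) → MvPolynomial (Fin 2) ℂ := fun r =>
    ∑ k : Fin (n + 1), C (M r k) * (X 0 ^ (k : ℕ) * X 1 ^ (n - k : ℕ))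
  have hform : ∀ r, (form r).IsHomogeneous n := fun r => .sum _ _ _ fun k _ => by
    simpa [Nat.add_sub_of_le (Nat.lt_succ_iff.1 k.2)] using (isHomogeneous_C _ (M r k)).mul
      ((isHomogeneous_X_pow 0 (k : ℕ)).mul (isHomogeneous_X_pow 1 (n - k)))
  have hpolar : ∀ p, (polar form form p).IsHomogeneous (2 * n) := fun p => by
    induction p with
    | _ a b =>
      rw [two_mul]
      exact ((hform a).mul (hform b)).add ((hform b).mul (hform a))
  choose S hS using fun p => exists_dotProduct_veron_eq_eval (hpolar p)
  refine ⟨.of fun k p => S p k, fun y => funext fun p =>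
    Eq.trans ?_ ((hS p y).trans (dotProduct_comm _ _))⟩
  induction p with
  | _ a b => simp [polar, form, Matrix.mulVec, dotProduct, veron]

-- The restriction of a quadric to the curve is a binary form of degree `2 * n`; a quadric through
-- the curve contains a chord as soon as the endpoints of the chord are conjugate.
theorem exists_quadricConditions_mulVec_eq_zero {n : ℕ} {ι : Type} [Fintype ι]
    (hcard : 2 * n + 1 + Fintype.card ι < (n + 2).choose 2)
    (M : Matrix (Fin (n + 1)) (Fin (n + 1)) ℂ) (y : ι → Fin 2 → Fin 2 → ℂ)
    (G : ι → Matrix (Fin 2) (Fin 2) ℂ) :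
    ∃ x ≠ 0, (quadricConditions fun j => M * veronMatrix n (y j) * G j).mulVec x = 0 := by
  obtain ⟨S, hS⟩ := exists_polar_veron_eq M
  let P : ι → Fin 2 → Fin (n + 1) → ℂ := fun j a => M.mulVec (veron n (y j a))
  let A : Matrix (Fin (2 * n + 1) ⊕ ι) (Sym2 (Fin (n + 1))) ℂ :=
    Matrix.fromRows S (.of fun j => polar (P j 0) (P j 1))
  obtain ⟨x, hxA, hx⟩ : ∃ x ∈ A.mulVecLin.ker, x ≠ 0 := by
    refine Submodule.exists_mem_ne_zero_of_ne_bot (LinearMap.ker_ne_bot_of_finrank_lt ?_)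
    simpa [Sym2.card] using hcard
  have hxA : A.mulVec x = 0 := hxA
  have hcurve : ∀ v, polar (M.mulVec (veron n v)) (M.mulVec (veron n v)) ⬝ᵥ x = 0 := fun v => by
    have : S.mulVec x = 0 := funext fun k => congrFun hxA (.inl k)
    rw [hS, ← Matrix.dotProduct_mulVec, this, dotProduct_zero]
  have hchord : ∀ j, polar (P j 0) (P j 1) ⬝ᵥ x = 0 := fun j => congrFun hxA (.inr j)
  refine ⟨x, hx, funext fun ⟨j, p⟩ => ?_⟩
  induction p with
  | _ c d =>
    rw [quadricConditions_mulVec]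
    have := polar_mulVec (M * veronMatrix n (y j)) ((G j).col c) ((G j).col d)
    have hcol : ∀ a, (M * veronMatrix n (y j)).col a = P j a := fun a => rfl
    have hcolB : ∀ a, (M * veronMatrix n (y j) * G j).col a =
      (M * veronMatrix n (y j)).mulVec ((G j).col a) := fun a => rfl
    rw [hcolB, hcolB, this]
    simp only [add_dotProduct, smul_dotProduct, hcol, hchord]
    simp [P, hcurve]

/-- Five lines of `ℙ⁴` that lie on no common quadric: the line `j` joins the coordinate point `e_j`
to `e_{j+1} + e_{j+2}`, with indices modulo `5`. -/
def cyclicLines (j : Fin 5) : Matrix (Fin 5) (Fin 2) ℂ :=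
  (Matrix.of ![Pi.single j 1, Pi.single (j + 1) 1 + Pi.single (j + 2) 1]).transpose

theorem eq_zero_of_quadricConditions_cyclicLines {x : Sym2 (Fin 5) → ℂ}
    (hx : (quadricConditions cyclicLines).mulVec x = 0) : x = 0 := by
  have hcond : ∀ j c d, polar ((cyclicLines j).col c) ((cyclicLines j).col d) ⬝ᵥ x = 0 :=
    fun j c d => congrFun hx (j, s(c, d))
  have hdiag : ∀ j, x s(j, j) = 0 := fun j => by
    simpa [cyclicLines, polar_single_single] using hcond j 0 0
  have hmixed : ∀ j, x s(j, j + 1) + x s(j, j + 2) = 0 := fun j => by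
    simpa [cyclicLines, polar_single_single, polar_add_right] using hcond j 0 1
  have hnext : ∀ j, x s(j + 1, j + 2) = 0 := fun j => by
    have := hcond j 1 1
    simpa [cyclicLines, polar_single_single, polar_add_left, polar_add_right, hdiag,
      Sym2.eq_swap (a := j + 2), ← two_mul] using this
  have hfirst : ∀ j, x s(j, j + 1) = 0 := fun j => by
    have := hnext (j - 1)
    rwa [sub_add_cancel, sub_add_eq_add_sub, add_sub_assoc,
      show (2 - 1 : Fin 5) = 1 from rfl] at this
  have hsecond : ∀ j, x s(j, j + 2) = 0 := fun j => by simpa [hfirst] using hmixed j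
  ext p
  induction p with
  | _ a b =>
    obtain ⟨d, rfl⟩ : ∃ d, b = a + d := ⟨b - a, by simp⟩
    fin_cases d
    · simp [hdiag]
    · exact hfirst a
    · exact hsecond a
    · simpa [add_assoc, Sym2.eq_swap] using hsecond (a + 3)
    · simpa [add_assoc, Sym2.eq_swap] using hfirst (a + 4)

/-- The determinant of the quadric conditions on five lines of `ℙ⁴`, as a polynomial in the entries
of the spanning matrices. -/
def quadricDet : MvPolynomial (Fin 5 × Fin 5 × Fin 2) ℂ :=
  ((quadricConditions fun j => .of fun r c => X (j, r, c)).submatrix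
    (Fintype.equivOfCardEq (by simp [Sym2.card]; rfl) : Sym2 (Fin 5) ≃ Fin 5 × Sym2 (Fin 2)) id).det

theorem eval_quadricDet_eq_zero_iff (B : Fin 5 → Matrix (Fin 5) (Fin 2) ℂ) :
    eval (fun p => B p.1 p.2.1 p.2.2) quadricDet = 0 ↔
      ∃ x ≠ 0, (quadricConditions B).mulVec x = 0 := by
  rw [quadricDet, RingHom.map_det, RingHom.mapMatrix_apply, ← Matrix.submatrix_map,
    quadricConditions_map, ← Matrix.exists_mulVec_eq_zero_iff]
  have hB : (fun j => (Matrix.of fun r c => X (j, r, c)).map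
      (eval fun p : Fin 5 × Fin 5 × Fin 2 => B p.1 p.2.1 p.2.2)) = B := by
    ext j r c
    simp
  rw [hB]
  exact exists_congr fun x => and_congr_right fun _ =>
    (Equiv.surjective (α := Sym2 (Fin 5)) _).injective_comp_right.eq_iff
      (a := (quadricConditions B).mulVec x) (b := 0)

theorem genericLines_four_not_chordsOfRNC :
    GenericLines 4 (Fin 5) fun B => ¬ ChordsOfRNC B := by
  refine ⟨quadricDet, fun h => ?_, fun B hB hev hchord => hev ?_⟩
  · obtain ⟨x, hx, hker⟩ := (eval_quadricDet_eq_zero_iff cyclicLines).1 (by rw [h, map_zero])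
    exact hx (eq_zero_of_quadricConditions_cyclicLines hker)
  · obtain ⟨M, -, y, G, hfactor⟩ := (chordsOfRNC_iff (by norm_num) hB).1 hchord
    rw [eval_quadricDet_eq_zero_iff, funext hfactor]
    exact exists_quadricConditions_mulVec_eq_zero (by rw [Fintype.card_fin]; decide) M y G

end Quadrics

section Obstructions

open Polynomial

/-- A covector annihilating the differential of the chord parametrization at the rational normal
curve `[s : t] ↦ [tⁿ : s tⁿ⁻¹ : ⋯ : sⁿ]` with chords through the points of affine coordinates
`t j 0` and `t j 1`. The component at the `c`-th spanning point of the `j`-th chord is recorded as a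
polynomial `P j c`, the form on `ℂⁿ⁺¹` with values `(P j c).eval s` on the curve; the three
vanishing conditions correspond to moving the curve, the contact points and the spanning points. -/
structure IsObstruction (n : ℕ) {ι : Type} [Fintype ι] (t : ι → Fin 2 → ℂ)
    (P : ι → Fin 2 → ℂ[X]) : Prop where
  natDegree_le : ∀ j c, (P j c).natDegree ≤ n
  sum_eq_zero : ∀ k ≤ n, ∑ j, ∑ c, C (t j c ^ k) * P j c = 0
  eval_derivative : ∀ j c, (P j c).derivative.eval (t j c) = 0
  eval_eq_zero : ∀ j c a, (P j c).eval (t j a) = 0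

/-- The chord parametrization is a submersion at the chords with affine coordinates `t`. -/
def IsUnobstructed (n : ℕ) {ι : Type} [Fintype ι] (t : ι → Fin 2 → ℂ) : Prop :=
  ∀ P, IsObstruction n t P → P = 0

theorem IsUnobstructed.comp {n : ℕ} {ι κ : Type} [Fintype ι] [Fintype κ] {t : ι → Fin 2 → ℂ}
    (h : IsUnobstructed n t) (e : κ ↪ ι) : IsUnobstructed n (t ∘ e) := by
  intro P hP
  have hextend (j : ι) : (∃ i, e i = j ∧ Function.extend e P 0 j = P i) ∨
      Function.extend e P 0 j = 0 := by
    by_cases hj : ∃ i, e i = j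
    · obtain ⟨i, rfl⟩ := hj
      exact .inl ⟨i, rfl, e.injective.extend_apply _ _ _⟩
    · exact .inr (Function.extend_apply' _ _ _ hj)
  have hzero : Function.extend e P 0 = 0 := by
    refine h _ ⟨fun j c => ?_, fun k hk => ?_, fun j c => ?_, fun j c a => ?_⟩
    · rcases hextend j with ⟨i, rfl, hi⟩ | hj
      · exact hi ▸ hP.natDegree_le i c
      · simp [hj]
    · rw [← hP.sum_eq_zero k hk]
      refine (Fintype.sum_of_injective e e.injective _ _ (fun j hj => ?_) fun i => ?_).symm
      · simp [Function.extend_apply' _ _ _ hj]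
      · simp [e.injective.extend_apply]
    · rcases hextend j with ⟨i, rfl, hi⟩ | hj
      · exact hi ▸ hP.eval_derivative i c
      · simp [hj]
    · rcases hextend j with ⟨i, rfl, hi⟩ | hj
      · exact hi ▸ hP.eval_eq_zero i c a
      · simp [hj]
  ext1 i
  rw [← e.injective.extend_apply P 0 i, hzero]
  rfl

section Jacobian

variable {n : ℕ} {ι : Type} (t : ι → Fin 2 → ℂ) (j : ι) (r : Fin (n + 1))
  (c : Fin 2)

theorem eval_pderiv_chordPoly_curve (r' k : Fin (n + 1)) :
    MvPolynomial.eval (chordParam 1 1 t) (MvPolynomial.pderiv (.inl (r', k))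
      (chordPoly (j, r, c))) = if r = r' then t j c ^ (k : ℕ) else 0 := by
  classical
  fin_cases c <;>
    simp [chordPoly, MvPolynomial.pderiv_X, Pi.single_apply, ite_and,
      apply_ite (MvPolynomial.eval (chordParam 1 1 t))]

theorem eval_pderiv_chordPoly_frame [DecidableEq ι] (j' : ι) (a c' : Fin 2) :
    MvPolynomial.eval (chordParam 1 1 t) (MvPolynomial.pderiv (.inr (.inl (j', a, c')))
      (chordPoly (j, r, c))) = if j = j' ∧ c = c' then t j a ^ (r : ℕ) else 0 := by
  fin_cases a <;>
    simp [chordPoly, MvPolynomial.pderiv_X, Pi.single_apply, ite_and,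
      apply_ite (MvPolynomial.eval (chordParam 1 1 t)), Matrix.one_apply]

theorem eval_pderiv_chordPoly_contact [DecidableEq ι] (j' : ι) (a : Fin 2) :
    MvPolynomial.eval (chordParam 1 1 t) (MvPolynomial.pderiv (.inr (.inr (j', a)))
      (chordPoly (j, r, c))) =
        if j = j' ∧ a = c then (r : ℕ) * t j a ^ ((r : ℕ) - 1) else 0 := by
  fin_cases a <;>
    simp [chordPoly, MvPolynomial.pderiv_X, Pi.single_apply, ite_and,
      apply_ite (MvPolynomial.eval (chordParam 1 1 t)), Matrix.one_apply]

end Jacobian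

theorem linearIndependent_pderiv_chordPoly {n : ℕ} {ι : Type} [Fintype ι] {t : ι → Fin 2 → ℂ}
    (ht : IsUnobstructed n t) : LinearIndependent ℂ fun (p : ι × Fin (n + 1) × Fin 2) s =>
      MvPolynomial.eval (chordParam 1 1 t) (MvPolynomial.pderiv s (chordPoly p)) := by
  classical
  rw [Fintype.linearIndependent_iff]
  intro g hg
  have hsum (s : ChordParam n ι) : ∑ j, ∑ r, ∑ c, g (j, r, c) * MvPolynomial.eval
      (chordParam 1 1 t) (MvPolynomial.pderiv s (chordPoly (j, r, c))) = 0 := by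
    simpa [Fintype.sum_prod_type] using congrFun hg s
  let P : ι → Fin 2 → ℂ[X] := fun j c => ∑ r : Fin (n + 1), C (g (j, r, c)) * X ^ (r : ℕ)
  have hdeg j c : (P j c).natDegree ≤ n := natDegree_sum_le_of_forall_le _ _ fun r _ =>
    (natDegree_C_mul_X_pow_le _ _).trans (Nat.lt_succ_iff.1 r.2)
  have hcoeff j c (r : Fin (n + 1)) : (P j c).coeff r = g (j, r, c) := by
    simp [P, coeff_X_pow, Fin.val_inj]
  have hP : P = 0 := by
    refine ht P ⟨hdeg, fun k hk => ?_, fun j c => ?_, fun j c a => ?_⟩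
    · ext r
      rcases lt_or_ge n r with hr | hr
      · simp only [finsetSum_coeff, coeff_C_mul,
          coeff_eq_zero_of_natDegree_lt ((hdeg _ _).trans_lt hr), mul_zero, Finset.sum_const_zero,
          coeff_zero]
      · have hk' : k < n + 1 := Nat.lt_succ_iff.2 hk
        lift r to Fin (n + 1) using Nat.lt_succ_iff.2 hr
        simp only [finsetSum_coeff, coeff_C_mul, hcoeff, coeff_zero]
        simpa [eval_pderiv_chordPoly_curve, mul_comm] using hsum (.inl (r, ⟨k, hk'⟩))
    · simpa [eval_pderiv_chordPoly_contact, ite_and, P, eval_finsetSum, derivative_X_pow]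
        using hsum (.inr (.inr (j, c)))
    · simpa [eval_pderiv_chordPoly_frame, ite_and, P, eval_finsetSum]
        using hsum (.inr (.inl (j, a, c)))
  rintro ⟨j, r, c⟩
  rw [← hcoeff, hP]
  rfl

theorem genericLines_chordsOfRNC_of_isUnobstructed {n : ℕ} (hn : 2 ≤ n) {ι : Type} [Fintype ι]
    {t : ι → Fin 2 → ℂ} (ht : IsUnobstructed n t) : GenericLines n ι ChordsOfRNC := by
  let g : MvPolynomial (ChordParam n ι) ℂ :=
    (Matrix.of fun r k : Fin (n + 1) => MvPolynomial.X (.inl (r, k))).det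
  have hg : ∀ x, MvPolynomial.eval x g = (Matrix.of fun r k => x (.inl (r, k))).det := fun x => by
    rw [RingHom.map_det]
    congr 1
    ext r k
    simp
  have hg0 : g ≠ 0 := fun h => by
    have := hg (chordParam 1 0 0)
    rw [h, map_zero] at this
    exact zero_ne_one (this.trans Matrix.det_one)
  obtain ⟨F, hF, hdominant⟩ := exists_ne_zero_of_algebraicIndependent
    (algebraicIndependent_of_linearIndependent_pderiv _ _
      (linearIndependent_pderiv_chordPoly ht)) hg0
  refine ⟨F, hF, fun B hB hev => ?_⟩
  obtain ⟨x, hx, hxB⟩ := hdominant _ hev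
  let M : Matrix (Fin (n + 1)) (Fin (n + 1)) ℂ := .of fun r k => x (.inl (r, k))
  let G : ι → Matrix (Fin 2) (Fin 2) ℂ := fun j => .of fun a c => x (.inr (.inl (j, a, c)))
  let s : ι → Fin 2 → ℂ := fun j a => x (.inr (.inr (j, a)))
  have hparam : chordParam M G s = x := by
    ext (_ | _ | _) <;> rfl
  refine (chordsOfRNC_iff hn hB).2 ⟨M, isUnit_iff_ne_zero.2 (hg x ▸ hx),
    fun j a => ![s j a, 1], G, fun j => ?_⟩
  ext r c
  rw [← hxB (j, r, c), ← hparam, eval_chordPoly]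

end Obstructions

section DistinctPoints

open Polynomial Lagrange

variable {F I : Type*} [Field F] [Fintype I] [DecidableEq I] {t : I → F}

theorem exists_degree_lt_eq_nodalWeight_mul_eval (ht : Function.Injective t) {u : I → F} {N m : ℕ}
    (hcard : Fintype.card I = N + m) (hu : ∀ k < N, ∑ x, u x * t x ^ k = 0) :
    ∃ q : F[X], q.degree < (m : WithBot ℕ) ∧
      ∀ x, u x = nodalWeight Finset.univ t x * q.eval (t x) := by
  have hweight (x : I) : nodalWeight Finset.univ t x ≠ 0 :=
    nodalWeight_ne_zero ht.injOn (Finset.mem_univ x)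
  induction N generalizing m with
  | zero =>
    let v : I → F := fun x => (nodalWeight Finset.univ t x)⁻¹ * u x
    refine ⟨interpolate Finset.univ t v, ?_, fun x => ?_⟩
    · simpa [hcard] using degree_interpolate_lt v (ht.injOn (s := (Finset.univ : Finset I)))
    · rw [eval_interpolate_at_node v ht.injOn (Finset.mem_univ x), mul_inv_cancel_left₀ (hweight x)]
  | succ N ih =>
    obtain ⟨q, hdeg, hq⟩ := ih (m := m + 1) (by lia) fun k hk => hu k (by lia)
    refine ⟨q, ?_, hq⟩
    have hdegX : (q * X ^ N).degree < ((Finset.univ : Finset I).card : WithBot ℕ) := by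
      rw [Finset.card_univ, hcard, degree_lt_iff_coeff_zero]
      intro r hr
      rw [coeff_mul_X_pow', if_pos (by lia)]
      exact (degree_lt_iff_coeff_zero _ _).1 hdeg _ (by lia)
    have hcoeff : q.coeff m = 0 := by
      have h := coeff_eq_sum ht.injOn hdegX
      rw [Finset.card_univ, hcard, show N + 1 + m - 1 = m + N by lia, coeff_mul_X_pow] at h
      rw [h, ← hu N N.lt_succ_self]
      refine Finset.sum_congr rfl fun x _ => ?_
      rw [hq, nodalWeight, Finset.prod_inv_distrib, eval_mul, eval_pow, eval_X]
      ring
    rw [degree_lt_iff_coeff_zero] at hdeg ⊢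
    intro r hr
    rcases hr.eq_or_lt with rfl | hr
    · exact hcoeff
    · exact hdeg r hr

theorem exists_natDegree_le_eq_nodalWeight_mul_sum (ht : Function.Injective t) {P : I → F[X]}
    {n N m : ℕ} (hcard : Fintype.card I = N + m) (hdeg : ∀ x, (P x).natDegree ≤ n)
    (hsum : ∀ k < N, ∑ x, C (t x ^ k) * P x = 0) :
    ∃ K : Fin m → F[X], (∀ i, (K i).natDegree ≤ n) ∧
      ∀ x, P x = C (nodalWeight Finset.univ t x) * ∑ i : Fin m, C (t x ^ (i : ℕ)) * K i := by
  have hcoeff (r : ℕ) := exists_degree_lt_eq_nodalWeight_mul_eval ht (u := fun x => (P x).coeff r)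
    hcard fun k hk => by
      simpa [finsetSum_coeff, -map_pow, mul_comm] using congrArg (fun p => p.coeff r) (hsum k hk)
  choose q hqdeg hq using hcoeff
  have hqr (r : ℕ) (x : I) : (P x).coeff r =
      nodalWeight Finset.univ t x * ∑ i : Fin m, t x ^ (i : ℕ) * (q r).coeff i := by
    rw [hq, eval_eq_sum, ← sum_fin _ (by simp) (hqdeg r)]
    simp only [mul_comm]
  refine ⟨fun i => ∑ r ∈ Finset.range (n + 1), C ((q r).coeff i) * X ^ r, fun i => ?_, fun x => ?_⟩
  · exact natDegree_sum_le_of_forall_le _ _ fun r hr =>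
      (natDegree_C_mul_X_pow_le _ _).trans (Nat.lt_succ_iff.1 (Finset.mem_range.1 hr))
  · ext r
    rcases lt_or_ge n r with hr | hr
    · rw [coeff_eq_zero_of_natDegree_lt ((hdeg x).trans_lt hr)]
      simp [finsetSum_coeff, coeff_X_pow, hr.not_ge, -map_pow]
    · simp [finsetSum_coeff, coeff_X_pow, hr, hqr, -map_pow]

theorem exists_natDegree_le_eq_sq_mul (ht : Function.Injective t) {P : I → F[X]} {n : ℕ}
    (hlt : n + 2 < Fintype.card I) (hle : Fintype.card I ≤ n + 4)
    (hdeg : ∀ x, (P x).natDegree ≤ n) (hsum : ∀ k ≤ n, ∑ x, C (t x ^ k) * P x = 0)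
    (heval : ∀ x, (P x).eval (t x) = 0) (hderiv : ∀ x, (P x).derivative.eval (t x) = 0) :
    ∃ K : F[X], K.natDegree ≤ n ∧
      ∀ x, P x = C (nodalWeight Finset.univ t x) * ((X - C (t x)) ^ 2 * K) := by
  have hweight (x : I) : nodalWeight Finset.univ t x ≠ 0 :=
    nodalWeight_ne_zero ht.injOn (Finset.mem_univ x)
  obtain ⟨N, hN⟩ := Nat.exists_eq_add_of_le' (show 3 ≤ Fintype.card I by lia)
  obtain ⟨K, hK, hP⟩ := exists_natDegree_le_eq_nodalWeight_mul_sum ht hN hdeg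
    fun k hk => hsum k (by lia)
  simp only [Fin.sum_univ_three, Fin.val_zero, Fin.val_one, Fin.val_two, pow_zero, pow_one,
    map_one, one_mul] at hP
  have hvalue : K 0 + X * K 1 + X ^ 2 * K 2 = 0 := by
    refine eq_zero_of_natDegree_lt_card_of_eval_eq_zero _ ht (fun x => ?_) (lt_of_le_of_lt ?_ hlt)
    · simpa [hP, hweight] using heval x
    · have h0 := hK 0
      have h1 := hK 1
      have h2 := hK 2
      compute_degree
      lia
  have hslope : K 1 + 2 * X * K 2 = 0 := by
    refine eq_zero_of_natDegree_lt_card_of_eval_eq_zero _ ht (fun x => ?_) (lt_of_le_of_lt ?_ hlt)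
    · have hx : (K 0).derivative.eval (t x) + t x * (K 1).derivative.eval (t x) +
          t x ^ 2 * (K 2).derivative.eval (t x) = 0 := by
        simpa [hP, hweight, -map_pow] using hderiv x
      have hv := congrArg (fun p => p.derivative.eval (t x)) hvalue
      simp only [derivative_add, derivative_mul, derivative_X, derivative_X_sq, derivative_zero,
        eval_add, eval_mul, eval_X, eval_pow, eval_C, eval_zero, one_mul] at hv
      simp only [eval_add, eval_mul, eval_X, eval_ofNat]
      linear_combination hv - hx
    · have h1 := hK 1
      have h2 := hK 2
      compute_degree
      lia
  refine ⟨K 2, hK 2, fun x => ?_⟩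
  rw [hP, C_pow]
  linear_combination C (nodalWeight Finset.univ t x) * (hvalue + (C (t x) - X) * hslope)

theorem isUnobstructed_of_injective {n : ℕ} {ι : Type} [Fintype ι] {t : ι → Fin 2 → ℂ}
    (ht : Function.Injective (Function.uncurry t)) (hlt : n + 2 < 2 * Fintype.card ι)
    (hle : 2 * Fintype.card ι ≤ n + 4) : IsUnobstructed n t := by
  classical
  intro P hP
  have hcard : Fintype.card (ι × Fin 2) = 2 * Fintype.card ι := by simp [mul_comm]
  obtain ⟨K, hKdeg, hPK⟩ := exists_natDegree_le_eq_sq_mul ht (P := Function.uncurry P) (n := n)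
    (by lia) (by lia) (fun x => hP.natDegree_le _ _)
    (fun k hk => by rw [Fintype.sum_prod_type]; exact hP.sum_eq_zero k hk)
    (fun x => hP.eval_eq_zero _ _ _) (fun x => hP.eval_derivative _ _)
  have hK : K = 0 := by
    refine eq_zero_of_natDegree_lt_card_of_eval_eq_zero _ ht (fun ⟨j, a⟩ => ?_) (by lia)
    have hroot := hP.eval_eq_zero j (a + 1) a
    have hne : t j a ≠ t j (a + 1) := fun h => by
      simpa using congrArg Prod.snd (@ht (j, a) (j, a + 1) h)
    change (Function.uncurry P (j, a + 1)).eval _ = 0 at hroot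
    rw [hPK] at hroot
    simpa [nodalWeight_ne_zero ht.injOn, sub_ne_zero.2 hne] using hroot
  ext1 j
  ext1 c
  simpa [hK] using hPK (j, c)

end DistinctPoints

section Hexagon

open Polynomial

theorem eq_C_mul_sq_mul_of_natDegree_le_three {F : Type*} [Field F] {P : F[X]} {p q : F}
    (hpq : p ≠ q) (hdeg : P.natDegree ≤ 3) (hp : P.eval p = 0) (hderiv : P.derivative.eval p = 0)
    (hq : P.eval q = 0) : P = C P.leadingCoeff * ((X - C p) ^ 2 * (X - C q)) := by
  have hsq : (X - C p) ^ 2 ∣ P := by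
    rcases eq_or_ne P 0 with rfl | hP
    · exact dvd_zero _
    · exact (le_rootMultiplicity_iff hP).1
        ((one_lt_rootMultiplicity_iff_isRoot hP).2 ⟨hp, hderiv⟩)
  refine eq_leadingCoeff_mul_of_monic_of_dvd_of_natDegree_le
    (((monic_X_sub_C p).pow 2).mul (monic_X_sub_C q)) ?_ ?_
  · exact ((pairwise_coprime_X_sub_C (s := id) Function.injective_id hpq).pow_left).mul_dvd hsq
      (dvd_iff_isRoot.2 hq)
  · rwa [((monic_X_sub_C p).pow 2).natDegree_mul (monic_X_sub_C q), natDegree_pow,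
      natDegree_X_sub_C, natDegree_X_sub_C]

theorem moment_eq_zero_of_cubic_eq_zero {s : ℕ → ℕ → ℂ}
    (hs : ∀ k ≤ 3, C (s k 0) * X ^ 3 - C (2 * s (k + 1) 0 + s k 1) * X ^ 2 +
      C (s (k + 2) 0 + 2 * s (k + 1) 1) * X - C (s (k + 2) 1) = 0)
    {i m : ℕ} (hi : i < 6) (hm : m < 2) : s i m = 0 := by
  have hX3 (k : ℕ) (hk : k ≤ 3) : s k 0 = 0 := by
    simpa [coeff_X, coeff_C, -map_add, -map_mul] using congrArg (fun p => p.coeff 3) (hs k hk)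
  have hX2 (k : ℕ) (hk : k ≤ 3) : 2 * s (k + 1) 0 + s k 1 = 0 := by
    simpa [coeff_X, coeff_C, -map_add, -map_mul, -neg_add_rev]
      using congrArg (fun p => p.coeff 2) (hs k hk)
  have hX1 (k : ℕ) (hk : k ≤ 3) : s (k + 2) 0 + 2 * s (k + 1) 1 = 0 := by
    simpa [coeff_X, coeff_C, -map_add, -map_mul] using congrArg (fun p => p.coeff 1) (hs k hk)
  have hX0 (k : ℕ) (hk : k ≤ 3) : s (k + 2) 1 = 0 := by
    simpa [coeff_X, coeff_C, -map_add, -map_mul] using congrArg (fun p => p.coeff 0) (hs k hk)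
  interval_cases m
  · interval_cases i
    · exact hX3 0 (by decide)
    · exact hX3 1 (by decide)
    · exact hX3 2 (by decide)
    · exact hX3 3 (by decide)
    · linear_combination hX2 3 le_rfl / 2 - hX0 1 (by decide) / 2
    · linear_combination hX1 3 le_rfl - 2 * hX0 2 (by decide)
  · interval_cases i
    · linear_combination hX2 0 (by decide) - 2 * hX3 1 (by decide)
    · linear_combination hX2 1 (by decide) - 2 * hX3 2 (by decide)
    · exact hX0 0 (by decide)
    · exact hX0 1 (by decide)
    · exact hX0 2 (by decide)
    · exact hX0 3 le_rfl

theorem IsObstruction.exists_moments_eq_zero {ι : Type} [Fintype ι] {t : ι → Fin 2 → ℂ}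
    {P : ι → Fin 2 → ℂ[X]} (hP : IsObstruction 3 t P) (ht : ∀ j, t j 0 ≠ t j 1) :
    ∃ w : ι → Fin 2 → ℂ,
      (∀ j c, P j c = C (w j c) * ((X - C (t j c)) ^ 2 * (X - C (t j (c + 1))))) ∧
      ∀ i < 6, ∀ m < 2, ∑ j, ∑ c, w j c * (t j c ^ i * t j (c + 1) ^ m) = 0 := by
  have hform j c : P j c =
      C (P j c).leadingCoeff * ((X - C (t j c)) ^ 2 * (X - C (t j (c + 1)))) :=
    eq_C_mul_sq_mul_of_natDegree_le_three (by fin_cases c; exacts [ht j, (ht j).symm])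
      (hP.natDegree_le j c) (hP.eval_eq_zero j c c) (hP.eval_derivative j c)
      (hP.eval_eq_zero j c (c + 1))
  let w j c := (P j c).leadingCoeff
  let s : ℕ → ℕ → ℂ := fun i m => ∑ j, ∑ c, w j c * (t j c ^ i * t j (c + 1) ^ m)
  refine ⟨w, hform, fun i hi m hm =>
    moment_eq_zero_of_cubic_eq_zero (s := s) (fun k hk => ?_) hi hm⟩
  rw [← hP.sum_eq_zero k hk]
  simp only [s, map_sum, map_add, Finset.mul_sum, Finset.sum_mul, ← Finset.sum_add_distrib,
    ← Finset.sum_sub_distrib]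
  refine Finset.sum_congr rfl fun j _ => Finset.sum_congr rfl fun c _ => ?_
  rw [hform]
  simp only [map_mul, map_pow, map_ofNat]
  ring

theorem isUnobstructed_hexagon {v : Fin 6 → ℂ} (hv : Function.Injective v) :
    IsUnobstructed 3 fun j => ![v j, v (j + 1)] := by
  intro P hP
  obtain ⟨w, hform, hw⟩ := hP.exists_moments_eq_zero fun j h => by simpa using hv h
  have hvertex (m : ℕ) (hm : m < 2) (j : Fin 6) :
      w j 0 * v (j + 1) ^ m + w (j - 1) 1 * v (j - 1) ^ m = 0 := by
    refine congrFun (Matrix.eq_zero_of_forall_pow_sum_mul_pow_eq_zero hv (v := fun j =>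
      w j 0 * v (j + 1) ^ m + w (j - 1) 1 * v (j - 1) ^ m) fun i => ?_) j
    have hcross : ∑ j, w (j - 1) 1 * v (j - 1) ^ m * v j ^ (i : ℕ) =
        ∑ j, w j 1 * v j ^ m * v (j + 1) ^ (i : ℕ) := by
      rw [← Equiv.sum_comp (Equiv.addRight 1)]
      simp
    simp only [add_mul, Finset.sum_add_distrib, hcross]
    rw [← hw i i.2 m hm]
    simp [Finset.sum_add_distrib, mul_assoc, mul_comm, mul_left_comm]
  have hw0 (j : Fin 6) : w j 0 = 0 := by
    have hne : v (j + 1) - v (j - 1) ≠ 0 :=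
      sub_ne_zero.2 (hv.ne (by revert j; decide))
    refine (mul_eq_zero.1 ?_).resolve_right hne
    linear_combination hvertex 1 one_lt_two j - v (j - 1) * hvertex 0 two_pos j
  have hw1 (j : Fin 6) : w j 1 = 0 := by
    simpa [hw0] using hvertex 0 two_pos (j + 1)
  ext1 j
  ext1 c
  rw [hform]
  fin_cases c <;> simp [hw0, hw1]

end Hexagon

section Counts

theorem genericLines_three_chordsOfRNC {l : ℕ} (hl : l ≤ 6) :
    GenericLines 3 (Fin l) ChordsOfRNC :=
  genericLines_chordsOfRNC_of_isUnobstructed (by norm_num)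
    ((isUnobstructed_hexagon (Nat.cast_injective.comp Fin.val_injective)).comp (Fin.castLEEmb hl))

theorem genericLines_chordsOfRNC_of_le {n l : ℕ} (hn : 2 ≤ n) (hl : l ≤ n / 2 + 2) :
    GenericLines n (Fin l) ChordsOfRNC := by
  let t : Fin (n / 2 + 2) × Fin 2 → ℂ := fun x => (finProdFinEquiv x : ℕ)
  have ht : Function.Injective t :=
    Nat.cast_injective.comp (Fin.val_injective.comp finProdFinEquiv.injective)
  have hunobstructed : IsUnobstructed n (Function.curry t) :=
    isUnobstructed_of_injective ht (by rw [Fintype.card_fin]; lia) (by rw [Fintype.card_fin]; lia)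
  exact genericLines_chordsOfRNC_of_isUnobstructed hn (hunobstructed.comp (Fin.castLEEmb hl))

theorem sq_add_six_mul_lt_of_half_add_three_le {n l : ℕ} (h4 : 4 < n) (h5 : n ≠ 5) (h7 : n ≠ 7)
    (hl : n / 2 + 3 ≤ l) : (n + 1) ^ 2 + 6 * l < 2 * (n + 1) * l + 3 := by
  obtain ⟨e, rfl⟩ := Nat.exists_eq_add_of_le hl
  rcases Nat.even_or_odd' n with ⟨k, rfl | rfl⟩
  · rw [show 2 * k / 2 = k by lia]
    nlinarith [show 3 ≤ k by lia]
  · rw [show (2 * k + 1) / 2 = k by lia]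
    nlinarith [show 4 ≤ k by lia]

theorem genericLines_not_chordsOfRNC_of_le {n l : ℕ}
    (h : (n = 3 ∧ 7 ≤ l) ∨ (n = 5 ∧ 6 ≤ l) ∨ (n = 7 ∧ 7 ≤ l) ∨
      (3 < n ∧ n ≠ 5 ∧ n ≠ 7 ∧ n / 2 + 3 ≤ l)) :
    GenericLines n (Fin l) fun B => ¬ ChordsOfRNC B := by
  rcases eq_or_ne n 4 with rfl | h4
  · exact genericLines_four_not_chordsOfRNC.not_chordsOfRNC_of_embedding
      (Fin.castLEEmb (show 5 ≤ l by lia))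
  · refine genericLines_not_chordsOfRNC_of_card (by lia) ?_
    rw [Nat.card_fin]
    rcases h with ⟨rfl, h⟩ | ⟨rfl, h⟩ | ⟨rfl, h⟩ | ⟨h3, h5, h7, h⟩
    · lia
    · lia
    · lia
    · exact sq_add_six_mul_lt_of_half_add_three_le (by lia) h5 h7 h

end Counts

/-- Configurations of `l` generic lines in `ℙⁿ`: feasibility and non-feasibility cases.
`⌊n/2⌋` is the natural-number division `n / 2`. -/
theorem lines_configurations (n l : ℕ) (hn : 3 ≤ n)
    (L : Fin (n - 1) → ℕ) (hL : L = fun j => if j.1 = 1 then l else 0) :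
    (((n = 3 ∧ l ≤ 6) ∨ (3 < n ∧ l ≤ n / 2 + 2)) → Feasible n L) ∧
    (((n = 3 ∧ 7 ≤ l) ∨ (n = 5 ∧ 6 ≤ l) ∨ (n = 7 ∧ 7 ≤ l) ∨
        (3 < n ∧ n ≠ 5 ∧ n ≠ 7 ∧ n / 2 + 3 ≤ l)) → NonFeasible n L) := by
  have hother (i : Fin (n - 1)) (hi : i.1 ≠ 1) : L i = 0 := by simp [hL, hi]
  have hlines : L ⟨1, by lia⟩ = l := by simp [hL]
  constructor
  · intro h
    apply feasible_of_genericLines (by lia) hother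
    rw [hlines]
    rcases h with ⟨rfl, hl⟩ | ⟨-, hl⟩
    · exact genericLines_three_chordsOfRNC hl
    · exact genericLines_chordsOfRNC_of_le (by lia) hl
  · intro h
    apply nonFeasible_of_genericLines (by lia) hother
    rw [hlines]
    exact genericLines_not_chordsOfRNC_of_le h

end
end

section
/- Let n ≥ 5 and consider the weight vector L = (0,3,0,…,0,2,0) in ℙⁿ, i.e., l₁ = 3, l_{n−3} = 2 and all other entries zero. Then L is non-feasible: for a generic configuration of three lines and two (n−3)-dimensional linear subspaces in ℙⁿ(ℂ), there is no rational normal curve meeting each line in exactly 2 points and each (n−3)-dimensional subspace in exactly n−2 points. -/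
/-!
Projecting a rational normal curve from a codimension-3 space `P_q` that meets it in `n - 2`
points gives a plane conic, and a line `A_j` meeting the curve twice becomes a chord of that
conic. In coordinates, the form `u ↦ det (u, P_q, A_j)`, restricted to the curve, is a constant
multiple of `f_q h_j`, where the binary forms `f_q` and `h_j` vanish at the intersections with
`P_q` and `A_j`. Hence the number `W_ji`, the exterior product of the two forms
`det (·, P_0, A_j)` and `det (·, P_1, A_j)` evaluated on the line `A_i`, equals
`κ_j φ_i ρ_ji`, where `κ_j` depends on `j` only, `φ_i` depends on `i` only and the resultant `ρ_ji`
of `h_j` and `h_i` is symmetric. Therefore `W_10 W_21 W_02 = W_20 W_01 W_12`, a polynomial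
condition on the configuration, in the spirit of Carnot's theorem on six points of a conic. It
fails when the two projections send the lines to the sides of the same triangle with opposite
orders of the vertices on each side.
-/

noncomputable section

section Wedge

/-- The standard symplectic form on `R²`: over a field, `wedge v w` vanishes exactly when the
points `[v]` and `[w]` of `ℙ¹` agree. -/
def wedge {R : Type*} [CommRing R] (v w : Fin 2 → R) : R :=
  v 0 * w 1 - v 1 * w 0

theorem wedge_swap {R : Type*} [CommRing R] (v w : Fin 2 → R) : wedge w v = -wedge v w := by
  simp only [wedge]
  ring

variable {K : Type*} [Field K]

theorem exists_eq_smul_of_wedge_eq_zero {v w : Fin 2 → K} (hw : w ≠ 0) (h : wedge v w = 0) :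
    ∃ c : K, v = c • w := by
  have hvw : v 0 * w 1 = v 1 * w 0 := sub_eq_zero.mp h
  obtain ⟨i, hi⟩ := Function.ne_iff.mp hw
  refine ⟨v i / w i, funext fun j => ?_⟩
  rw [Pi.smul_apply, smul_eq_mul, div_mul_eq_mul_div, eq_div_iff hi]
  fin_cases i <;> fin_cases j <;> simp [hvw]

theorem exists_forall_wedge_ne_zero [Infinite K] {ι : Type*} [Finite ι] (w : ι → Fin 2 → K)
    (hw : ∀ i, w i ≠ 0) : ∃ v : Fin 2 → K, ∀ i, wedge v (w i) ≠ 0 := by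
  let wedgeRight (i : ι) : Module.Dual K (Fin 2 → K) :=
    w i 1 • LinearMap.proj 0 - w i 0 • LinearMap.proj 1
  have wedgeRight_apply (i : ι) (v : Fin 2 → K) : wedgeRight i v = wedge v (w i) := by
    simp [wedgeRight, wedge, mul_comm]
  have hne (i : ι) : ∃ v, wedgeRight i v ≠ 0 := by
    by_contra! h
    refine hw i (funext fun j => ?_)
    have h₀ := h ![1, 0]
    have h₁ := h ![0, 1]
    fin_cases j <;> simp_all [wedge]
  obtain ⟨v, hv⟩ := Module.Dual.exists_forall_ne_zero_of_forall_exists wedgeRight hne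
  exact ⟨v, fun i => wedgeRight_apply i v ▸ hv i⟩

end Wedge

section HyperplaneForm

/-- The linear form `u ↦ det (u, H)` cutting out the hyperplane spanned by `n` vectors `H` of
`R^{n+1}`; it is zero when these vectors are dependent. -/
def hyperplaneForm {R : Type*} [CommRing R] {n : ℕ} (H : Fin n → Fin (n + 1) → R) :
    (Fin (n + 1) → R) →ₗ[R] R :=
  Matrix.detRowAlternating.toMultilinearMap.toLinearMap (Fin.cons 0 H) 0

theorem hyperplaneForm_apply {R : Type*} [CommRing R] {n : ℕ} (H : Fin n → Fin (n + 1) → R)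
    (u : Fin (n + 1) → R) :
    hyperplaneForm H u = (Matrix.of (Fin.cons u H : Fin (n + 1) → Fin (n + 1) → R)).det := by
  change Matrix.det (Function.update (Fin.cons 0 H) 0 u) = _
  rw [Fin.update_cons_zero]
  rfl

theorem map_hyperplaneForm {R S : Type*} [CommRing R] [CommRing S] (φ : R →+* S) {n : ℕ}
    (H : Fin n → Fin (n + 1) → R) (u : Fin (n + 1) → R) :
    φ (hyperplaneForm H u) = hyperplaneForm (fun i => φ ∘ H i) (φ ∘ u) := by
  rw [hyperplaneForm_apply, hyperplaneForm_apply, RingHom.map_det]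
  congr 1
  ext i j
  cases i using Fin.cases <;> simp

variable {K : Type*} [Field K] {n : ℕ} {H : Fin n → Fin (n + 1) → K}

theorem hyperplaneForm_ne_zero_iff {u : Fin (n + 1) → K} :
    hyperplaneForm H u ≠ 0 ↔
      LinearIndependent K H ∧ u ∉ Submodule.span K (Set.range H) := by
  rw [hyperplaneForm_apply, ← isUnit_iff_ne_zero, ← Matrix.isUnit_iff_isUnit_det,
    ← Matrix.linearIndependent_rows_iff_isUnit, Matrix.of_row, linearIndependent_finCons]

theorem hyperplaneForm_eq_zero_of_mem_span {u : Fin (n + 1) → K}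
    (hu : u ∈ Submodule.span K (Set.range H)) : hyperplaneForm H u = 0 :=
  not_imp_comm.mp (fun h => (hyperplaneForm_ne_zero_iff.mp h).2) (not_not.mpr hu)

theorem hyperplaneForm_eq_zero_of_not_linearIndependent (hH : ¬LinearIndependent K H) :
    hyperplaneForm H = 0 :=
  LinearMap.ext fun _ => not_imp_comm.mp (fun h => (hyperplaneForm_ne_zero_iff.mp h).1) hH

theorem exists_eq_smul_hyperplaneForm (hH : LinearIndependent K H)
    {ℓ : (Fin (n + 1) → K) →ₗ[K] K} (hℓ : ∀ i, ℓ (H i) = 0) :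
    ∃ c : K, ℓ = c • hyperplaneForm H := by
  have hspan : Submodule.span K (Set.range H) ≤ LinearMap.ker ℓ :=
    Submodule.span_le.mpr (Set.range_subset_iff.mpr hℓ)
  have hker : LinearMap.ker (hyperplaneForm H) ≤ LinearMap.ker ℓ := fun u hu =>
    hspan <| by_contra fun hu' => hyperplaneForm_ne_zero_iff.mpr ⟨hH, hu'⟩ hu
  have hmem := mem_span_of_iInf_ker_le_ker (L := fun _ : Unit => hyperplaneForm H) (K := ℓ)
    (by simpa using hker)
  rw [Set.range_const, Submodule.mem_span_singleton] at hmem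
  obtain ⟨c, hc⟩ := hmem
  exact ⟨c, hc.symm⟩

end HyperplaneForm

section Veronese

theorem of_veron_eq_projVandermonde {n : ℕ} (w : Fin (n + 1) → Fin 2 → ℂ) :
    (Matrix.of fun i => veron n (w i)) =
      Matrix.projVandermonde (fun i => w i 0) (fun i => w i 1) := by
  ext i j
  simp [veron, Matrix.projVandermonde_apply, Fin.val_rev]

theorem hyperplaneForm_veron {n : ℕ} (w : Fin n → Fin 2 → ℂ) (v : Fin 2 → ℂ) :
    hyperplaneForm (fun k => veron n (w k)) (veron n v) =
      (∏ k, wedge (w k) v) * ∏ i, ∏ j ∈ Finset.Ioi i, wedge (w j) (w i) := by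
  have hcons : (Fin.cons (veron n v) (fun k => veron n (w k)) : Fin (n + 1) → Fin (n + 1) → ℂ) =
      fun i => veron n ((Fin.cons v w : Fin (n + 1) → Fin 2 → ℂ) i) := by
    ext i
    cases i using Fin.cases <;> rfl
  rw [hyperplaneForm_apply, hcons, of_veron_eq_projVandermonde, Matrix.det_projVandermonde,
    Fin.prod_univ_succ, Fin.prod_Ioi_zero]
  simp only [Fin.prod_Ioi_succ, Fin.cons_zero, Fin.cons_succ, wedge, mul_comm]

theorem linearIndependent_veron {n : ℕ} {w : Fin n → Fin 2 → ℂ} (hw₀ : ∀ k, w k ≠ 0)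
    (hw : Pairwise fun i j => wedge (w i) (w j) ≠ 0) :
    LinearIndependent ℂ fun k => veron n (w k) := by
  obtain ⟨v, hv⟩ := exists_forall_wedge_ne_zero w hw₀
  refine (hyperplaneForm_ne_zero_iff (u := veron n v) |>.mp ?_).1
  rw [hyperplaneForm_veron]
  refine mul_ne_zero (Finset.prod_ne_zero_iff.mpr fun k _ => ?_)
    (Finset.prod_ne_zero_iff.mpr fun i _ => Finset.prod_ne_zero_iff.mpr fun j hj =>
      hw (Finset.mem_Ioi.mp hj).ne')
  rw [wedge_swap]
  exact neg_ne_zero.mpr (hv k)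

theorem exists_apply_veron_eq_mul_prod_wedge {n : ℕ} {w : Fin n → Fin 2 → ℂ}
    (hw₀ : ∀ k, w k ≠ 0) (hw : Pairwise fun i j => wedge (w i) (w j) ≠ 0)
    {ℓ : (Fin (n + 1) → ℂ) →ₗ[ℂ] ℂ} (hℓ : ∀ k, ℓ (veron n (w k)) = 0) :
    ∃ c : ℂ, ∀ v, ℓ (veron n v) = c * ∏ k, wedge v (w k) := by
  obtain ⟨c, rfl⟩ := exists_eq_smul_hyperplaneForm (linearIndependent_veron hw₀ hw) hℓ
  refine ⟨c * ((-1) ^ n * ∏ i, ∏ j ∈ Finset.Ioi i, wedge (w j) (w i)), fun v => ?_⟩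
  have hswap : ∏ k, wedge (w k) v = (-1) ^ n * ∏ k, wedge v (w k) := by
    simp [wedge_swap v, Finset.prod_neg]
  rw [LinearMap.smul_apply, hyperplaneForm_veron, hswap, smul_eq_mul]
  ring

end Veronese

section JoinForm

theorem linearIndependent_finAppend_iff {R V : Type*} [Ring R] [AddCommGroup V] [Module R V]
    {d e : ℕ} {u : Fin d → V} {v : Fin e → V} :
    LinearIndependent R (Fin.append u v) ↔
      LinearIndependent R u ∧ LinearIndependent R v ∧
        Disjoint (Submodule.span R (Set.range u)) (Submodule.span R (Set.range v)) := by
  rw [← linearIndependent_equiv finSumFinEquiv, linearIndependent_sum]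
  simp [Function.comp_def]

/-- The linear form cutting out the hyperplane that joins the column spaces of `P` and `A`; it is
zero when the columns of `P` and `A` together are dependent. -/
def joinForm {R : Type*} [CommRing R] {d e : ℕ} (P : Matrix (Fin (d + e + 1)) (Fin d) R)
    (A : Matrix (Fin (d + e + 1)) (Fin e) R) : (Fin (d + e + 1) → R) →ₗ[R] R :=
  hyperplaneForm (Fin.append P.col A.col)

theorem map_joinForm {R S : Type*} [CommRing R] [CommRing S] (φ : R →+* S) {d e : ℕ}
    (P : Matrix (Fin (d + e + 1)) (Fin d) R) (A : Matrix (Fin (d + e + 1)) (Fin e) R)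
    (u : Fin (d + e + 1) → R) : φ (joinForm P A u) = joinForm (P.map φ) (A.map φ) (φ ∘ u) := by
  rw [joinForm, map_hyperplaneForm, joinForm]
  congr 2
  ext i
  cases i using Fin.addCases <;> simp

variable {K : Type*} [Field K] {d e : ℕ} {P : Matrix (Fin (d + e + 1)) (Fin d) K}
  {A : Matrix (Fin (d + e + 1)) (Fin e) K} {u : Fin (d + e + 1) → K}

theorem joinForm_eq_zero_of_mem_span_left (hu : u ∈ Submodule.span K (Set.range P.col)) :
    joinForm P A u = 0 := by
  refine hyperplaneForm_eq_zero_of_mem_span (Submodule.span_mono ?_ hu)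
  exact Set.range_subset_iff.mpr fun i => ⟨Fin.castAdd e i, Fin.append_left ..⟩

theorem joinForm_eq_zero_of_mem_span_right (hu : u ∈ Submodule.span K (Set.range A.col)) :
    joinForm P A u = 0 := by
  refine hyperplaneForm_eq_zero_of_mem_span (Submodule.span_mono ?_ hu)
  exact Set.range_subset_iff.mpr fun i => ⟨Fin.natAdd d i, Fin.append_right ..⟩

theorem exists_comp_eq_smul_joinForm {V : Type*} [AddCommGroup V] [Module K V]
    {f : (Fin (d + e + 1) → K) →ₗ[K] V} (hP : LinearIndependent K P.col)
    (hPf : Submodule.span K (Set.range P.col) = LinearMap.ker f)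
    (hA : LinearIndependent K (f ∘ A.col)) {ℓ : V →ₗ[K] K} (hℓ : ∀ i, ℓ (f (A.col i)) = 0) :
    ∃ c : K, ℓ ∘ₗ f = c • joinForm P A := by
  have hPA : LinearIndependent K (Fin.append P.col A.col) :=
    linearIndependent_finAppend_iff.mpr
      ⟨hP, hA.of_comp f, by rw [hPf]; exact (Submodule.range_ker_disjoint (v := A.col) hA).symm⟩
  unfold joinForm
  refine exists_eq_smul_hyperplaneForm hPA fun i => ?_
  cases i using Fin.addCases with
  | left i =>
    have hi : P.col i ∈ LinearMap.ker f := by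
      rw [← hPf]
      exact Submodule.subset_span (Set.mem_range_self i)
    rw [Fin.append_left, LinearMap.comp_apply, LinearMap.mem_ker.mp hi, map_zero]
  | right i => rw [Fin.append_right, LinearMap.comp_apply, hℓ]

end JoinForm

section Parameters

/-- Parameters `t` of pairwise distinct points at which the curve `[v] ↦ [M (veron n v)]` meets
the column space of `A`. -/
structure IsIntersectionParam {n k m : ℕ} (M : Matrix (Fin (n + 1)) (Fin (n + 1)) ℂ)
    (A : Matrix (Fin (n + 1)) (Fin m) ℂ) (t : Fin k → Fin 2 → ℂ) : Prop where
  ne_zero : ∀ i, M.mulVec (veron n (t i)) ≠ 0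
  mem_span : ∀ i, M.mulVec (veron n (t i)) ∈ Submodule.span ℂ (Set.range A.col)
  linearIndependent : Pairwise fun i j =>
    LinearIndependent ℂ ![M.mulVec (veron n (t i)), M.mulVec (veron n (t j))]

theorem exists_isIntersectionParam {n k m : ℕ} {M : Matrix (Fin (n + 1)) (Fin (n + 1)) ℂ}
    {A : Matrix (Fin (n + 1)) (Fin m) ℂ}
    (h : ({P : PP n | ∃ v : Fin 2 → ℂ, v ≠ 0 ∧ ∃ c : ℂ, c ≠ 0 ∧
      P.rep = c • M.mulVec (veron n v)} ∩ projSet A).ncard = k + 1) :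
    ∃ t : Fin (k + 1) → Fin 2 → ℂ, IsIntersectionParam M A t := by
  have := (Set.finite_of_ncard_ne_zero (by rw [h]; exact k.succ_ne_zero)).to_subtype
  let point := (Finite.equivFinOfCardEq ((Nat.card_coe_set_eq _).trans h)).symm
  choose t _ c hc hrep using fun i => (point i).2.1
  have hcurve (i) : M.mulVec (veron n (t i)) = (c i)⁻¹ • (point i).1.rep := by
    rw [hrep i, inv_smul_smul₀ (hc i)]
  refine ⟨t, fun i => ?_, fun i => ?_, fun i j hij => ?_⟩
  · rw [hcurve]
    exact smul_ne_zero (inv_ne_zero (hc i)) (point i).1.rep_nonzero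
  · rw [hcurve]
    exact Submodule.smul_mem _ _ (point i).2.2
  · have hne : (point i).1 ≠ (point j).1 := fun h => hij (point.injective (Subtype.ext h))
    have hrep_indep := Projectivization.independent_iff.mp
      ((Projectivization.independent_pair_iff_ne _ _).mpr hne)
    beta_reduce
    rw [hcurve, hcurve, LinearIndependent.pair_smul_smul_iff (inv_ne_zero (hc i)).isUnit
      (inv_ne_zero (hc j)).isUnit]
    rwa [← FinVec.map_eq] at hrep_indep

namespace IsIntersectionParam

variable {n k m : ℕ} {M : Matrix (Fin (n + 1)) (Fin (n + 1)) ℂ}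
  {A : Matrix (Fin (n + 1)) (Fin m) ℂ} {t : Fin k → Fin 2 → ℂ}

theorem param_ne_zero (ht : IsIntersectionParam M A t) (hn : n ≠ 0) (i : Fin k) : t i ≠ 0 := by
  intro hi
  apply ht.ne_zero i
  rw [hi, veron_zero hn, Matrix.mulVec_zero]

theorem pairwise_wedge_ne_zero (ht : IsIntersectionParam M A t) (hn : n ≠ 0) :
    Pairwise fun i j => wedge (t i) (t j) ≠ 0 := by
  intro i j hij hw
  obtain ⟨c, hc⟩ := exists_eq_smul_of_wedge_eq_zero (ht.param_ne_zero hn j) hw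
  have := (linearIndependent_fin2.mp (ht.linearIndependent hij)).2 (c ^ n)
  simp [hc, veron_smul, Matrix.mulVec_smul] at this

theorem wedge_ne_zero_of_disjoint {l p : ℕ} {B : Matrix (Fin (n + 1)) (Fin p) ℂ}
    {s : Fin l → Fin 2 → ℂ} (ht : IsIntersectionParam M A t) (hs : IsIntersectionParam M B s)
    (hn : n ≠ 0) (hAB : Disjoint (Submodule.span ℂ (Set.range A.col))
      (Submodule.span ℂ (Set.range B.col))) (i : Fin k) (j : Fin l) :
    wedge (t i) (s j) ≠ 0 := by
  intro hw
  obtain ⟨c, hc⟩ := exists_eq_smul_of_wedge_eq_zero (hs.param_ne_zero hn j) hw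
  refine ht.ne_zero i (Submodule.disjoint_def.mp hAB _ (ht.mem_span i) ?_)
  rw [hc, veron_smul, Matrix.mulVec_smul]
  exact Submodule.smul_mem _ _ (hs.mem_span j)

end IsIntersectionParam

theorem exists_joinForm_mulVec_veron_eq {d e : ℕ}
    {M : Matrix (Fin (d + e + 1)) (Fin (d + e + 1)) ℂ} {P : Matrix (Fin (d + e + 1)) (Fin d) ℂ}
    {A : Matrix (Fin (d + e + 1)) (Fin e) ℂ} {s : Fin d → Fin 2 → ℂ} {t : Fin e → Fin 2 → ℂ}
    (hde : d + e ≠ 0) (hs : IsIntersectionParam M P s) (ht : IsIntersectionParam M A t) :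
    ∃ c : ℂ, ∀ v, joinForm P A (M.mulVec (veron (d + e) v)) =
      c * ((∏ i, wedge v (s i)) * ∏ j, wedge v (t j)) := by
  by_cases hPA : LinearIndependent ℂ (Fin.append P.col A.col)
  · have hst := hs.wedge_ne_zero_of_disjoint ht hde (linearIndependent_finAppend_iff.mp hPA).2.2
    have hne (x : Fin (d + e)) : Fin.append s t x ≠ 0 := by
      cases x using Fin.addCases with
      | left i => simpa using hs.param_ne_zero hde i
      | right j => simpa using ht.param_ne_zero hde j
    have hpair : Pairwise fun x y => wedge (Fin.append s t x) (Fin.append s t y) ≠ 0 := by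
      intro x y hxy
      cases x using Fin.addCases <;> cases y using Fin.addCases <;>
        simp only [Fin.append_left, Fin.append_right]
      · exact hs.pairwise_wedge_ne_zero hde (by simpa using hxy)
      · exact hst _ _
      · exact wedge_swap (s _) _ ▸ neg_ne_zero.mpr (hst _ _)
      · exact ht.pairwise_wedge_ne_zero hde (by simpa using hxy)
    obtain ⟨c, hc⟩ := exists_apply_veron_eq_mul_prod_wedge hne hpair
      (ℓ := joinForm P A ∘ₗ M.mulVecLin) fun x => by
        cases x using Fin.addCases with
        | left i => simpa using joinForm_eq_zero_of_mem_span_left (hs.mem_span i)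
        | right j => simpa using joinForm_eq_zero_of_mem_span_right (ht.mem_span j)
    exact ⟨c, fun v => by simpa [Fin.prod_univ_add] using hc v⟩
  · exact ⟨0, fun v => by simp [joinForm, hyperplaneForm_eq_zero_of_not_linearIndependent hPA]⟩

end Parameters

section CarnotDefect

/-- The evaluation of the exterior product of the linear forms `X` and `Y` at `(a, b)`. -/
def formWedge {R V : Type*} [CommRing R] [AddCommGroup V] [Module R V] (X Y : V →ₗ[R] R)
    (a b : V) : R :=
  X a * Y b - X b * Y a

theorem exists_formWedge_eq_mul {K V : Type*} [Field K] [AddCommGroup V] [Module K V]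
    {a : Fin 2 → V} {p q : V} (hp : p ∈ Submodule.span K (Set.range a))
    (hq : q ∈ Submodule.span K (Set.range a)) (hpq : LinearIndependent K ![p, q]) :
    ∃ δ : K, δ ≠ 0 ∧ ∀ X Y : V →ₗ[K] K,
      formWedge X Y p q = δ * formWedge X Y (a 0) (a 1) := by
  obtain ⟨s, rfl⟩ := Submodule.mem_span_range_iff_exists_fun K |>.mp hp
  obtain ⟨t, rfl⟩ := Submodule.mem_span_range_iff_exists_fun K |>.mp hq
  rw [Fin.sum_univ_two, Fin.sum_univ_two, LinearIndependent.pair_add_smul_add_smul_iff] at hpq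
  refine ⟨s 0 * t 1 - s 1 * t 0, sub_ne_zero.mpr hpq.2, fun X Y => ?_⟩
  simp only [formWedge, Fin.sum_univ_two, map_add, map_smul, smul_eq_mul]
  ring

/-- The difference of the two cyclic products of off-diagonal entries of `W`, as they appear in
Ceva's and Carnot's theorems. -/
def carnotDefect {R : Type*} [CommRing R] (W : Fin 3 → Fin 3 → R) : R :=
  W 1 0 * W 2 1 * W 0 2 - W 2 0 * W 0 1 * W 1 2

theorem carnotDefect_mul {R : Type*} [CommRing R] (κ φ : Fin 3 → R) (W : Fin 3 → Fin 3 → R) :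
    carnotDefect (fun j i => κ j * φ i * W j i) =
      (∏ j, κ j) * (∏ i, φ i) * carnotDefect W := by
  simp only [carnotDefect, Fin.prod_univ_three]
  ring

theorem carnotDefect_eq_zero_of_symm {R : Type*} [CommRing R] {W : Fin 3 → Fin 3 → R}
    (hW : ∀ j i, W j i = W i j) : carnotDefect W = 0 := by
  rw [carnotDefect, hW 1 0, hW 2 1, hW 0 2]
  ring

/-- For subspaces `P₀`, `P₁` of codimension 3 and lines `A`, the entry `(j, i)` compares on the
line `A i` the two hyperplanes joining `P₀` and `P₁` to the line `A j`. -/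
def secantMatrix {R : Type*} [CommRing R] {d : ℕ} (P : Fin 2 → Matrix (Fin (d + 2 + 1)) (Fin d) R)
    (A : Fin 3 → Matrix (Fin (d + 2 + 1)) (Fin 2) R) (j i : Fin 3) : R :=
  formWedge (joinForm (P 0) (A j)) (joinForm (P 1) (A j)) ((A i).col 0) ((A i).col 1)

theorem map_carnotDefect_secantMatrix {R S : Type*} [CommRing R] [CommRing S] (φ : R →+* S)
    {d : ℕ} (P : Fin 2 → Matrix (Fin (d + 2 + 1)) (Fin d) R)
    (A : Fin 3 → Matrix (Fin (d + 2 + 1)) (Fin 2) R) :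
    φ (carnotDefect (secantMatrix P A)) =
      carnotDefect (secantMatrix (fun q => (P q).map φ) fun i => (A i).map φ) := by
  simp only [carnotDefect, secantMatrix, formWedge, map_sub, map_mul, map_joinForm]
  rfl

theorem carnotDefect_secantMatrix_eq_zero {d : ℕ}
    {M : Matrix (Fin (d + 2 + 1)) (Fin (d + 2 + 1)) ℂ}
    {P : Fin 2 → Matrix (Fin (d + 2 + 1)) (Fin d) ℂ}
    {A : Fin 3 → Matrix (Fin (d + 2 + 1)) (Fin 2) ℂ}
    {s : Fin 2 → Fin d → Fin 2 → ℂ} {t : Fin 3 → Fin 2 → Fin 2 → ℂ}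
    (hs : ∀ q, IsIntersectionParam M (P q) (s q)) (ht : ∀ i, IsIntersectionParam M (A i) (t i)) :
    carnotDefect (secantMatrix P A) = 0 := by
  choose c hc using fun q j =>
    exists_joinForm_mulVec_veron_eq (by lia) (hs q) (ht j)
  choose δ hδ hW using fun i => exists_formWedge_eq_mul ((ht i).mem_span 0) ((ht i).mem_span 1)
    ((ht i).linearIndependent zero_ne_one)
  let f (q : Fin 2) (v : Fin 2 → ℂ) : ℂ := ∏ k, wedge v (s q k)
  let ρ (j i : Fin 3) : ℂ := ∏ a, ∏ b, wedge (t i a) (t j b)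
  have hρ (j i : Fin 3) : ρ j i = ρ i j := by
    simp only [ρ, Fin.prod_univ_two, wedge]
    ring
  have hfactor (j i : Fin 3) : δ i * secantMatrix P A j i =
      c 0 j * c 1 j * (f 0 (t i 0) * f 1 (t i 1) - f 0 (t i 1) * f 1 (t i 0)) * ρ j i := by
    rw [secantMatrix, ← hW, formWedge, hc, hc, hc, hc]
    simp only [ρ, f, Fin.prod_univ_two]
    ring
  have hscaled : (∏ i, δ i) * carnotDefect (secantMatrix P A) = 0 := by
    have := carnotDefect_mul 1 δ (secantMatrix P A)
    simp only [Pi.one_apply, one_mul, hfactor, Finset.prod_const_one] at this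
    rw [← this, carnotDefect_mul (fun j => c 0 j * c 1 j), carnotDefect_eq_zero_of_symm hρ,
      mul_zero]
  exact (mul_eq_zero.mp hscaled).resolve_left (Finset.prod_ne_zero_iff.mpr fun i _ => hδ i)

end CarnotDefect

section Witness

theorem exists_matrix_span_range_col_eq {K ι : Type*} [Field K] [Finite ι]
    (S : Submodule K (ι → K)) {d : ℕ} (hS : Module.finrank K S = d) :
    ∃ P : Matrix ι (Fin d) K,
      LinearIndependent K P.col ∧ Submodule.span K (Set.range P.col) = S := by
  let b := Module.finBasisOfFinrankEq K S hS
  refine ⟨Matrix.of fun r k => (b k : ι → K) r,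
    b.linearIndependent.map' S.subtype S.ker_subtype, ?_⟩
  change Submodule.span K (Set.range (S.subtype ∘ b)) = S
  rw [Set.range_comp, Submodule.span_image, b.span_eq, Submodule.map_subtype_top]

theorem finrank_ker_funLeft {K ι κ : Type*} [Field K] [Fintype ι] [Fintype κ] {g : κ → ι}
    (hg : Function.Injective g) :
    Module.finrank K (LinearMap.ker (LinearMap.funLeft K K g)) + Fintype.card κ =
      Fintype.card ι := by
  have := (LinearMap.funLeft K K g).finrank_range_add_finrank_ker
  rwa [LinearMap.range_eq_top.mpr (LinearMap.funLeft_surjective_of_injective K K g hg),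
    finrank_top, Module.finrank_fintype_fun_eq_card, Module.finrank_fintype_fun_eq_card,
    add_comm] at this

/-- The vertices other than `i` of the coordinate triangle, in one of the two orders according to
`q`; they span the side opposite to the vertex `i`. -/
def oppositeSide (R : Type*) [CommRing R] (i : Fin 3) (q c : Fin 2) : Fin 3 → R :=
  Pi.single (if c = q then i + 1 else i + 2) 1

variable (R : Type*) [CommRing R]

theorem linearIndependent_oppositeSide (i : Fin 3) (q : Fin 2) :
    LinearIndependent R (oppositeSide R i q) := by
  refine (Pi.linearIndependent_single_one (Fin 3) R).comp
    (fun c : Fin 2 => if c = q then i + 1 else i + 2) ?_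
  decide +revert

theorem oppositeSide_apply_self (i : Fin 3) (q c : Fin 2) : oppositeSide R i q c i = 0 := by
  have : i ≠ if c = q then i + 1 else i + 2 := by decide +revert
  exact Pi.single_eq_of_ne this 1

theorem carnotDefect_oppositeSide :
    carnotDefect (fun j i => oppositeSide R i 0 0 j * oppositeSide R i 1 1 j -
      oppositeSide R i 0 1 j * oppositeSide R i 1 0 j) = 2 := by
  have hentry (j i : Fin 3) : oppositeSide R i 0 0 j * oppositeSide R i 1 1 j -
      oppositeSide R i 0 1 j * oppositeSide R i 1 0 j =
        (if j = i + 1 then 1 else 0) - if j = i + 2 then 1 else 0 := by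
    simp [oppositeSide, Pi.single_apply, ← ite_and]
  simp +decide [carnotDefect, hentry, one_add_one_eq_two]

theorem exists_carnotDefect_secantMatrix_ne_zero (K : Type*) [Field K] [NeZero (2 : K)] {d : ℕ}
    (hd : 3 ≤ d) :
    ∃ (P : Fin 2 → Matrix (Fin (d + 2 + 1)) (Fin d) K)
      (A : Fin 3 → Matrix (Fin (d + 2 + 1)) (Fin 2) K), carnotDefect (secantMatrix P A) ≠ 0 := by
  obtain ⟨ι⟩ : Nonempty (Fin 2 × Fin 3 ↪ Fin (d + 2 + 1)) :=
    Function.Embedding.nonempty_of_card_le (by simp only [Fintype.card_prod, Fintype.card_fin]; lia)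
  let π (q : Fin 2) : (Fin (d + 2 + 1) → K) →ₗ[K] (Fin 3 → K) :=
    LinearMap.funLeft K K fun k => ι (q, k)
  have hπ (q : Fin 2) : Module.finrank K (LinearMap.ker (π q)) = d := by
    have hcard := finrank_ker_funLeft (K := K) (ι.injective.comp (Prod.mk_right_injective q))
    rw [Fintype.card_fin, Fintype.card_fin] at hcard
    exact Nat.add_right_cancel hcard
  choose P hP hPπ using fun q => exists_matrix_span_range_col_eq _ (hπ q)
  -- Both projections send the lines to the sides of a triangle, in opposite orientations.
  let A (i : Fin 3) : Matrix (Fin (d + 2 + 1)) (Fin 2) K :=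
    Matrix.of fun r c => Function.extend ι (fun x => oppositeSide K i x.1 c x.2) 0 r
  have hA (q : Fin 2) (i : Fin 3) (c : Fin 2) : π q ((A i).col c) = oppositeSide K i q c :=
    funext fun k =>
      ι.injective.extend_apply (fun x : Fin 2 × Fin 3 => oppositeSide K i x.1 c x.2) 0 (q, k)
  choose c hc using fun q j => exists_comp_eq_smul_joinForm (hP q) (hPπ q)
    (A := A j) (ℓ := LinearMap.proj j)
    (by simpa only [Function.comp_def, hA] using linearIndependent_oppositeSide K j q)
    fun i => by rw [hA]; exact oppositeSide_apply_self K j q i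
  have happly (q : Fin 2) (j i : Fin 3) (e : Fin 2) :
      c q j * joinForm (P q) (A j) ((A i).col e) = oppositeSide K i q e j := by
    rw [← hA]
    exact (LinearMap.congr_fun (hc q j) _).symm
  refine ⟨P, A, fun h => NeZero.ne (2 : K) ?_⟩
  have := carnotDefect_mul (fun j => c 0 j * c 1 j) 1 (secantMatrix P A)
  rw [h, mul_zero] at this
  rw [← carnotDefect_oppositeSide, ← this]
  congr 1
  ext j i
  simp only [← happly, secantMatrix, formWedge, Pi.one_apply]
  ring

end Witness

section GenericConfig

/-- The indices of the matrix entries of a configuration of weight `L`, as in `GenHolds`. -/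
abbrev EntryIndex (n : ℕ) (L : Fin (n - 1) → ℕ) :=
  (i : Fin (n - 1)) × (Fin (L i) × Fin (n + 1) × Fin (i.1 + 1))

/-- The matrices of a configuration of weight `L` whose entries are independent variables. -/
def genericConfig (n : ℕ) (L : Fin (n - 1) → ℕ) (i : Fin (n - 1)) (j : Fin (L i)) :
    Matrix (Fin (n + 1)) (Fin (i.1 + 1)) (MvPolynomial (EntryIndex n L) ℂ) :=
  Matrix.of fun r c => MvPolynomial.X ⟨i, j, r, c⟩

theorem map_eval_genericConfig {n : ℕ} {L : Fin (n - 1) → ℕ} (A : Config n L) (i : Fin (n - 1))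
    (j : Fin (L i)) :
    (genericConfig n L i j).map
      (MvPolynomial.eval fun p => A p.1 p.2.1 p.2.2.1 p.2.2.2) = A i j := by
  ext r c
  simp [genericConfig]

theorem exists_config_eq {n : ℕ} {L : Fin (n - 1) → ℕ} {i₁ i₂ : Fin (n - 1)} (hne : i₁ ≠ i₂)
    {k₁ k₂ : ℕ} (h₁ : k₁ ≤ L i₁) (h₂ : k₂ ≤ L i₂)
    (B₁ : Fin k₁ → Matrix (Fin (n + 1)) (Fin (i₁.1 + 1)) ℂ)
    (B₂ : Fin k₂ → Matrix (Fin (n + 1)) (Fin (i₂.1 + 1)) ℂ) :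
    ∃ A : Config n L,
      (∀ j, A i₁ (Fin.castLE h₁ j) = B₁ j) ∧ ∀ j, A i₂ (Fin.castLE h₂ j) = B₂ j := by
  refine ⟨Function.update (Function.update 0 i₂ (Function.extend (Fin.castLE h₂) B₂ 0)) i₁
    (Function.extend (Fin.castLE h₁) B₁ 0), fun j => ?_, fun j => ?_⟩
  · rw [Function.update_self, (Fin.castLE_injective h₁).extend_apply]
  · rw [Function.update_of_ne hne.symm, Function.update_self,
      (Fin.castLE_injective h₂).extend_apply]

theorem three_lines_two_codim3_nonfeasible_general (n : ℕ) (hn : 5 ≤ n) (L : Fin (n - 1) → ℕ)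
    (hlines : 3 ≤ L ⟨1, by lia⟩) (hcodim3 : 2 ≤ L ⟨n - 3, by lia⟩) : NonFeasible n L := by
  obtain ⟨m, rfl⟩ : ∃ m, n = m + 1 + 2 := ⟨n - 3, by lia⟩
  let i₁ : Fin (m + 1 + 2 - 1) := ⟨1, by lia⟩
  let i₂ : Fin (m + 1 + 2 - 1) := ⟨m, by lia⟩
  have hne : i₁ ≠ i₂ := Fin.ne_of_val_ne (by simp only [i₁, i₂]; lia)
  let G := genericConfig (m + 1 + 2) L
  refine ⟨carnotDefect (secantMatrix (d := m + 1) (fun q => G i₂ (Fin.castLE hcodim3 q))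
    fun i => G i₁ (Fin.castLE hlines i)), fun hzero => ?_, ?_⟩
  · obtain ⟨P, A, hPA⟩ := exists_carnotDefect_secantMatrix_ne_zero ℂ (d := m + 1) (by lia)
    obtain ⟨B, hB₁, hB₂⟩ := exists_config_eq hne hlines hcodim3 A P
    have := congrArg (MvPolynomial.eval fun p => B p.1 p.2.1 p.2.2.1 p.2.2.2) hzero
    rw [map_carnotDefect_secantMatrix, map_zero] at this
    simp only [G, map_eval_genericConfig, hB₁, hB₂] at this
    exact hPA this
  · rintro A - hF ⟨_, ⟨M, -, rfl⟩, hmax⟩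
    rw [map_carnotDefect_secantMatrix] at hF
    simp only [G, map_eval_genericConfig] at hF
    choose s hs using fun q => exists_isIntersectionParam (hmax i₂ (Fin.castLE hcodim3 q))
    choose t ht using fun i => exists_isIntersectionParam (hmax i₁ (Fin.castLE hlines i))
    exact hF (carnotDefect_secantMatrix_eq_zero hs ht)

end GenericConfig

/-- The weight vector `(0,3,0,…,0,2,0)` in `ℙⁿ`, `n ≥ 5` (three generic lines and two
generic `(n-3)`-dimensional subspaces), is non-feasible: generically no rational normal
curve meets each line in exactly 2 points and each `(n-3)`-dimensional subspace in
exactly `n-2` points. -/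
theorem three_lines_two_codim3_nonfeasible (n : ℕ) (hn : 5 ≤ n)
    (L : Fin (n - 1) → ℕ)
    (hL : L = fun j => if j.1 = 1 then 3 else if j.1 = n - 3 then 2 else 0) :
    NonFeasible n L := by
  subst hL
  exact three_lines_two_codim3_nonfeasible_general n hn _ (by simp)
    (by dsimp only; split_ifs <;> lia)

end
end

section
/- Let m ≥ 1 and let s be an integer with m + 2 ≤ s ≤ 2m + 1. For s generic points P₁,…,P_s of ℙ¹(ℂ) × ℙᵐ(ℂ) × ℙᵐ(ℂ), the ℂ-vector space of multihomogeneous polynomials of multidegree (2,1,1) on ℂ² × ℂ^{m+1} × ℂ^{m+1} all of whose first-order partial derivatives vanish at a representative of each Pᵢ has dimension strictly greater than max(0, 3(m+1)² − s(2m+2)). By Terracini's lemma, this means the s-th higher secant variety of the Segre–Veronese embedding of ℙ¹ × ℙᵐ × ℙᵐ by forms of multidegree (2,1,1) does not have the expected dimension, i.e., this Segre–Veronese variety is s-defective. -/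
noncomputable section

/-- Variable index type for forms on `ℂ² × ℂ^{m+1} × ℂ^{m+1}`:
`x₀,x₁; y₀,…,y_m; z₀,…,z_m`. -/
abbrev SVIdx (m : ℕ) := Fin 2 ⊕ Fin (m + 1) ⊕ Fin (m + 1)

/-- The subspace of multihomogeneous polynomials of multidegree `(2,1,1)` on
`ℂ² × ℂ^{m+1} × ℂ^{m+1}`: every monomial in the support has degree `2` in the
`x`-variables, degree `1` in the `y`-variables and degree `1` in the `z`-variables. -/
def forms211 (m : ℕ) : Submodule ℂ (MvPolynomial (SVIdx m) ℂ) where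
  carrier := {p | ∀ d ∈ p.support,
    (∑ x : Fin 2, d (Sum.inl x)) = 2 ∧
    (∑ y : Fin (m + 1), d (Sum.inr (Sum.inl y))) = 1 ∧
    (∑ z : Fin (m + 1), d (Sum.inr (Sum.inr z))) = 1}
  zero_mem' := by simp
  add_mem' := by
    intro p q hp hq d hd
    rcases Finset.mem_union.mp (MvPolynomial.support_add hd) with h | h
    · exact hp d h
    · exact hq d h
  smul_mem' := by
    intro c p hp d hd
    exact hp d (MvPolynomial.support_smul hd)

/-- The subspace of polynomials all of whose first-order partial derivatives vanish at
each of the points `pt i` (for a nonzero representative this is the double-point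
condition at the corresponding point of `ℙ¹ × ℙᵐ × ℙᵐ`). -/
def doublePtConditions (m s : ℕ) (pt : Fin s → SVIdx m → ℂ) :
    Submodule ℂ (MvPolynomial (SVIdx m) ℂ) :=
  ⨅ (i : Fin s) (x : SVIdx m),
    LinearMap.ker ((MvPolynomial.aeval (R := ℂ) (pt i)).toLinearMap ∘ₗ
      (MvPolynomial.pderiv x).toLinearMap)

/-!
The bilinear forms in `x, y` that vanish at the `s` points, and likewise those in `x, z`, form a
space of dimension at least `2 (m + 1) - s`. A product of one form of each kind has multidegree
`(2,1,1)` and is singular at every point. Substituting for `x` a point `ξ` of the line that differs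
from all the first coordinates loses nothing when the `y`- and the `z`-coordinates span `ℂ^{m+1}`,
and it turns these products into products of forms in disjoint sets of variables, so products of
basis elements are linearly independent. Hence the space in question has dimension at least
`(2 (m + 1) - s) ^ 2`, which exceeds the expected dimension `3 (m + 1) ^ 2 - 2 s (m + 1)` by
`(s - (m + 1)) ^ 2`.
-/

open Matrix MvPolynomial

theorem finrank_sub_finrank_le_finrank_ker {K V W : Type*} [DivisionRing K] [AddCommGroup V]
    [Module K V] [Module.Finite K V] [AddCommGroup W] [Module K W] [Module.Finite K W]
    (f : V →ₗ[K] W) :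
    Module.finrank K V - Module.finrank K W ≤ Module.finrank K (LinearMap.ker f) := by
  have rank_nullity := f.finrank_range_add_finrank_ker
  have range_le := f.range.finrank_le
  omega

theorem linearIndependent_vecMulVec {R ι κ μ ν : Type*} [CommRing R] [Finite ι] [Finite κ]
    {f : ι → μ → R} {g : κ → ν → R} (hf : LinearIndependent R f) (hg : LinearIndependent R g) :
    LinearIndependent R fun p : ι × κ => vecMulVec (f p.1) (g p.2) := by
  cases nonempty_fintype ι
  cases nonempty_fintype κ
  rw [Fintype.linearIndependent_iff] at hf hg ⊢
  rintro t ht ⟨i, k⟩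
  have coeff_eq_zero (n : ν) : ∑ k, t (i, k) * g k n = 0 := by
    refine hf (fun i => ∑ k, t (i, k) * g k n) (funext fun m => ?_) i
    have entry := congrFun₂ ht m n
    simp only [Matrix.sum_apply, Fintype.sum_prod_type, Matrix.smul_apply,
      vecMulVec_apply, smul_eq_mul, Matrix.zero_apply] at entry
    simp only [Finset.sum_apply, Pi.smul_apply, smul_eq_mul, Finset.sum_mul, Pi.zero_apply]
    rw [← entry]
    exact Finset.sum_congr rfl fun _ _ => Finset.sum_congr rfl fun _ _ => by ring
  exact hg (fun k => t (i, k)) (funext fun n => by simpa using coeff_eq_zero n) k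

section BilinearForms

variable {R K ι κ ν : Type*} [CommRing R] [Field K] [Fintype κ] [Fintype ν]

/-- The bilinear forms on `R^κ × R^ν`, given by their Gram matrices, that vanish at every pair
`(a i, b i)`. -/
def vanishingForms (a : ι → κ → R) (b : ι → ν → R) : Submodule R (Matrix κ ν R) :=
  LinearMap.ker <| LinearMap.pi fun i =>
    dotProductBilin R R (a i) ∘ₗ (mulVecBilin R R).flip (b i)

theorem mem_vanishingForms {a : ι → κ → R} {b : ι → ν → R} {M : Matrix κ ν R} :
    M ∈ vanishingForms a b ↔ ∀ i, a i ⬝ᵥ M *ᵥ b i = 0 := by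
  simp [vanishingForms, funext_iff]

theorem card_mul_card_sub_card_le_finrank_vanishingForms [Fintype ι]
    (a : ι → κ → K) (b : ι → ν → K) :
    Fintype.card κ * Fintype.card ν - Fintype.card ι ≤
      Module.finrank K (vanishingForms a b) := by
  have bound := finrank_sub_finrank_le_finrank_ker (LinearMap.pi fun i =>
    dotProductBilin K K (a i) ∘ₗ (mulVecBilin K K).flip (b i))
  rw [Module.finrank_matrix, Module.finrank_self, mul_one, Module.finrank_pi] at bound
  exact bound

theorem exists_forall_det_pair_ne_zero [Finite ι] [Infinite K] {a : ι → Fin 2 → K}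
    (ha : ∀ i, a i ≠ 0) : ∃ ξ : Fin 2 → K, ∀ i, (of ![ξ, a i]).det ≠ 0 := by
  have exists_dotProduct_ne_zero (i : ι) :
      ∃ ξ, dotProductBilin K K ![a i 1, -a i 0] ξ ≠ 0 := by
    by_contra! h
    refine ha i (funext fun k => ?_)
    fin_cases k
    · simpa using h ![0, 1]
    · simpa using h ![1, 0]
  obtain ⟨ξ, hξ⟩ := Module.Dual.exists_forall_ne_zero_of_forall_exists _ exists_dotProduct_ne_zero
  have det_eq (i : ι) : (of ![ξ, a i]).det = dotProductBilin K K ![a i 1, -a i 0] ξ := by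
    simp only [det_fin_two, of_apply, cons_val_zero, cons_val_one, dotProductBilin_apply_apply,
      vec2_dotProduct]
    ring
  exact ⟨ξ, fun i => (det_eq i).trans_ne (hξ i)⟩

theorem eq_zero_of_mem_vanishingForms_of_vecMul_eq_zero [IsDomain R]
    {a : ι → Fin 2 → R} {b : ι → ν → R} {ξ : Fin 2 → R} (hξ : ∀ i, (of ![ξ, a i]).det ≠ 0)
    (hb : Submodule.span R (Set.range b) = ⊤) {M : Matrix (Fin 2) ν R}
    (hM : M ∈ vanishingForms a b) (hξM : ξ ᵥ* M = 0) : M = 0 := by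
  have mulVec_eq_zero (i : ι) : M *ᵥ b i = 0 := by
    refine eq_zero_of_mulVec_eq_zero (hξ i) (funext fun k => ?_)
    fin_cases k
    · simp [mulVec, dotProduct_mulVec, hξM]
    · simpa [mulVec] using mem_vanishingForms.mp hM i
  classical
  have mulVecLin_eq_zero : M.mulVecLin = 0 := LinearMap.ext_on_range hb mulVec_eq_zero
  exact toLin'.map_eq_zero_iff.mp mulVecLin_eq_zero

theorem linearIndependent_vecMul_of_vanishingForms [IsDomain R] {τ : Type*}
    {a : ι → Fin 2 → R} {b : ι → ν → R} {ξ : Fin 2 → R} (hξ : ∀ i, (of ![ξ, a i]).det ≠ 0)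
    (hb : Submodule.span R (Set.range b) = ⊤) {M : τ → vanishingForms a b}
    (hM : LinearIndependent R M) :
    LinearIndependent R fun t => ξ ᵥ* (M t : Matrix (Fin 2) ν R) := by
  refine hM.map' (vecMulBilin R R ξ ∘ₗ (vanishingForms a b).subtype) ?_
  refine LinearMap.ker_eq_bot'.mpr fun N hN => Subtype.ext ?_
  exact eq_zero_of_mem_vanishingForms_of_vecMul_eq_zero hξ hb N.2 hN

end BilinearForms

section BilinearPolynomials

variable {R σ κ ν : Type*} [CommSemiring R] [Fintype κ] [Fintype ν]

/-- The polynomial of the bilinear form with Gram matrix `M`, in the two groups of variables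
indexed through `e` and `f`. -/
def bilinearPoly (e : κ → σ) (f : ν → σ) (M : Matrix κ ν R) : MvPolynomial σ R :=
  ∑ k, ∑ n, C (M k n) * (X (e k) * X (f n))

theorem eval_bilinearPoly (e : κ → σ) (f : ν → σ) (M : Matrix κ ν R) (p : σ → R) :
    eval p (bilinearPoly e f M) = (p ∘ e) ⬝ᵥ M *ᵥ (p ∘ f) := by
  simp only [bilinearPoly, map_sum, map_mul, eval_C, eval_X, dotProduct, mulVec, Finset.mul_sum,
    Function.comp_apply]
  exact Finset.sum_congr rfl fun _ _ => Finset.sum_congr rfl fun _ _ => by ring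

theorem isWeightedHomogeneous_bilinearPoly {D : Type*} [AddCommMonoid D] {w : σ → D} {d₁ d₂ : D}
    {e : κ → σ} {f : ν → σ} (he : ∀ k, w (e k) = d₁) (hf : ∀ n, w (f n) = d₂)
    (M : Matrix κ ν R) : IsWeightedHomogeneous w (bilinearPoly e f M) (d₁ + d₂) := by
  refine .sum _ _ _ fun k _ => .sum _ _ _ fun n _ => .C_mul ?_ _
  rw [← he k, ← hf n]
  exact (isWeightedHomogeneous_X R w (e k)).mul (isWeightedHomogeneous_X R w (f n))

end BilinearPolynomials

theorem three_mul_sq_sub_lt_sq {n s : ℕ} (hn : n < s) (hs : s < 2 * n) :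
    3 * n ^ 2 - s * (2 * n) < (2 * n - s) ^ 2 := by
  have excess : 3 * n ^ 2 + (s - n) ^ 2 = s * (2 * n) + (2 * n - s) ^ 2 := by
    zify [hn.le, hs.le]
    ring
  have excess_pos : 0 < (s - n) ^ 2 := pow_pos (Nat.sub_pos_of_lt hn) 2
  have sq_pos : 0 < (2 * n - s) ^ 2 := pow_pos (Nat.sub_pos_of_lt hs) 2
  omega

section Forms

variable {m s : ℕ}

theorem mem_doublePtConditions {pt : Fin s → SVIdx m → ℂ} {P : MvPolynomial (SVIdx m) ℂ} :
    P ∈ doublePtConditions m s pt ↔ ∀ i x, eval (pt i) (pderiv x P) = 0 := by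
  simp [doublePtConditions]

theorem mul_mem_doublePtConditions {pt : Fin s → SVIdx m → ℂ} {P Q : MvPolynomial (SVIdx m) ℂ}
    (hP : ∀ i, eval (pt i) P = 0) (hQ : ∀ i, eval (pt i) Q = 0) :
    P * Q ∈ doublePtConditions m s pt :=
  mem_doublePtConditions.mpr fun i x => by simp [Derivation.leibniz, hP i, hQ i]

/-- The multidegree in `ℕ³` of each variable, so that multidegree becomes weighted degree. -/
def multidegreeWeight (m : ℕ) : SVIdx m → ℕ × ℕ × ℕ :=
  Sum.elim (fun _ => (1, 0, 0)) (Sum.elim (fun _ => (0, 1, 0)) fun _ => (0, 0, 1))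

theorem mem_forms211_iff_isWeightedHomogeneous {P : MvPolynomial (SVIdx m) ℂ} :
    P ∈ forms211 m ↔ IsWeightedHomogeneous (multidegreeWeight m) P (2, 1, 1) := by
  refine forall_congr' fun d => ?_
  rw [mem_support_iff, Finsupp.weight_apply, Finsupp.sum_fintype _ _ (by simp)]
  simp [multidegreeWeight, Prod.ext_iff, Prod.fst_sum, Prod.snd_sum]

instance finite_forms211 : Module.Finite ℂ (forms211 m) := by
  refine Submodule.finiteDimensional_of_le (S₂ := restrictTotalDegree (SVIdx m) ℂ 4) fun P hP => ?_
  refine (mem_restrictTotalDegree _ _ _).mpr (Finset.sup_le fun d hd => ?_)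
  obtain ⟨hx, hy, hz⟩ := hP d hd
  rw [Finsupp.sum_fintype _ _ fun _ => rfl, Fintype.sum_sum_type, Fintype.sum_sum_type, hx, hy, hz]
  norm_num

/-- The product of the bilinear forms in `x, y` and in `x, z` with Gram matrices `M` and `N`. -/
def bilinearProduct (M N : Matrix (Fin 2) (Fin (m + 1)) ℂ) : MvPolynomial (SVIdx m) ℂ :=
  bilinearPoly Sum.inl (Sum.inr ∘ Sum.inl) M * bilinearPoly Sum.inl (Sum.inr ∘ Sum.inr) N

theorem bilinearProduct_mem_forms211 (M N : Matrix (Fin 2) (Fin (m + 1)) ℂ) :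
    bilinearProduct M N ∈ forms211 m := by
  have degree_M := isWeightedHomogeneous_bilinearPoly (w := multidegreeWeight m)
    (e := Sum.inl) (f := Sum.inr ∘ Sum.inl) (fun _ => rfl) (fun _ => rfl) M
  have degree_N := isWeightedHomogeneous_bilinearPoly (w := multidegreeWeight m)
    (e := Sum.inl) (f := Sum.inr ∘ Sum.inr) (fun _ => rfl) (fun _ => rfl) N
  exact mem_forms211_iff_isWeightedHomogeneous.mpr (degree_M.mul degree_N)

theorem bilinearProduct_mem_doublePtConditions {a : Fin s → Fin 2 → ℂ}
    {b c : Fin s → Fin (m + 1) → ℂ} {M N : Matrix (Fin 2) (Fin (m + 1)) ℂ}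
    (hM : M ∈ vanishingForms a b) (hN : N ∈ vanishingForms a c) :
    bilinearProduct M N ∈
      doublePtConditions m s fun i => Sum.elim (a i) (Sum.elim (b i) (c i)) :=
  mul_mem_doublePtConditions
    (fun i => (eval_bilinearPoly ..).trans (mem_vanishingForms.mp hM i))
    (fun i => (eval_bilinearPoly ..).trans (mem_vanishingForms.mp hN i))

/-- Substitute `x = ξ`, and read the result as a bilinear form in `y, z` by taking its values at
the pairs of standard basis vectors. -/
def gramMatrixAt (ξ : Fin 2 → ℂ) :
    MvPolynomial (SVIdx m) ℂ →ₗ[ℂ] Matrix (Fin (m + 1)) (Fin (m + 1)) ℂ where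
  toFun P := of fun j l => eval (Sum.elim ξ (Sum.elim (Pi.single j 1) (Pi.single l 1))) P
  map_add' _ _ := by ext; simp
  map_smul' _ _ := by ext; simp

theorem gramMatrixAt_bilinearProduct (ξ : Fin 2 → ℂ) (M N : Matrix (Fin 2) (Fin (m + 1)) ℂ) :
    gramMatrixAt ξ (bilinearProduct M N) = vecMulVec (ξ ᵥ* M) (ξ ᵥ* N) := by
  ext j l
  simp [gramMatrixAt, bilinearProduct, eval_bilinearPoly, vecMulVec_apply, vecMul,
    ← Function.comp_assoc, col_def]

theorem finrank_vanishingForms_mul_le {a : Fin s → Fin 2 → ℂ} {b c : Fin s → Fin (m + 1) → ℂ}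
    (ha : ∀ i, a i ≠ 0) (hb : Submodule.span ℂ (Set.range b) = ⊤)
    (hc : Submodule.span ℂ (Set.range c) = ⊤) :
    Module.finrank ℂ (vanishingForms a b) * Module.finrank ℂ (vanishingForms a c) ≤
      Module.finrank ℂ ↥(forms211 m ⊓
        doublePtConditions m s fun i => Sum.elim (a i) (Sum.elim (b i) (c i))) := by
  have : Module.Finite ℂ ↥(forms211 m ⊓
      doublePtConditions m s fun i => Sum.elim (a i) (Sum.elim (b i) (c i))) :=
    Submodule.finiteDimensional_of_le inf_le_left
  obtain ⟨ξ, hξ⟩ := exists_forall_det_pair_ne_zero ha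
  let e := Module.finBasis ℂ (vanishingForms a b)
  let f := Module.finBasis ℂ (vanishingForms a c)
  let products (p : Fin _ × Fin _) : ↥(forms211 m ⊓
      doublePtConditions m s fun i => Sum.elim (a i) (Sum.elim (b i) (c i))) :=
    ⟨bilinearProduct (e p.1) (f p.2), bilinearProduct_mem_forms211 _ _,
      bilinearProduct_mem_doublePtConditions (e p.1).2 (f p.2).2⟩
  have linearIndependent_products : LinearIndependent ℂ products := by
    refine .of_comp (gramMatrixAt ξ ∘ₗ Submodule.subtype _) ?_
    simpa only [Function.comp_def, LinearMap.comp_apply, Submodule.subtype_apply, products,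
      gramMatrixAt_bilinearProduct] using linearIndependent_vecMulVec
        (linearIndependent_vecMul_of_vanishingForms hξ hb e.linearIndependent)
        (linearIndependent_vecMul_of_vanishingForms hξ hc f.linearIndependent)
  simpa using linearIndependent_products.fintype_card_le_finrank

theorem segre_veronese_211_defective_general {a : Fin s → Fin 2 → ℂ}
    {b c : Fin s → Fin (m + 1) → ℂ} (hs1 : m + 2 ≤ s) (hs2 : s ≤ 2 * m + 1)
    (ha : ∀ i, a i ≠ 0) (hb : Submodule.span ℂ (Set.range b) = ⊤)
    (hc : Submodule.span ℂ (Set.range c) = ⊤) :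
    3 * (m + 1) ^ 2 - s * (2 * m + 2) <
      Module.finrank ℂ ↥(forms211 m ⊓
        doublePtConditions m s fun i => Sum.elim (a i) (Sum.elim (b i) (c i))) := by
  have le_finrank (b : Fin s → Fin (m + 1) → ℂ) :
      2 * (m + 1) - s ≤ Module.finrank ℂ (vanishingForms a b) := by
    simpa only [Fintype.card_fin] using card_mul_card_sub_card_le_finrank_vanishingForms a b
  calc 3 * (m + 1) ^ 2 - s * (2 * m + 2)
      < (2 * (m + 1) - s) ^ 2 := three_mul_sq_sub_lt_sq (by omega) (by omega)
    _ ≤ Module.finrank ℂ (vanishingForms a b) * Module.finrank ℂ (vanishingForms a c) := by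
      rw [sq]
      exact Nat.mul_le_mul (le_finrank b) (le_finrank c)
    _ ≤ _ := finrank_vanishingForms_mul_le ha hb hc

end Forms

theorem exists_ne_zero_forall_eval_ne_zero_span_eq_top {K ι ν : Type*} [Field K]
    [Finite ν] (e : ν ↪ ι) :
    ∃ G : MvPolynomial (ι × ν) K, G ≠ 0 ∧ ∀ b : ι → ν → K,
      eval (fun q => b q.1 q.2) G ≠ 0 → Submodule.span K (Set.range b) = ⊤ := by
  classical
  cases nonempty_fintype ν
  refine ⟨rename (Prod.map e id) (mvPolynomialX ν ν K).det, ?_, fun b hb => ?_⟩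
  · rw [Ne, map_eq_zero_iff _ (rename_injective _ (e.injective.prodMap Function.injective_id))]
    exact det_mvPolynomialX_ne_zero ν K
  · have det_ne_zero : (of (b ∘ e)).det ≠ 0 := by
      rw [eval_rename, RingHom.map_det] at hb
      convert! hb
      exact (mvPolynomialX_mapMatrix_eval (of (b ∘ e))).symm
    have linearIndependent := linearIndependent_rows_of_det_ne_zero det_ne_zero
    refine top_unique ?_
    rw [← linearIndependent.span_eq_top_of_card_eq_finrank' (by simp)]
    exact Submodule.span_mono (Set.range_comp_subset_range e b)

theorem exists_ne_zero_forall_eval_ne_zero_span_eq_top_and {K α ι ν : Type*} [Field K]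
    [Finite ν] (e : ν ↪ ι) :
    ∃ F : MvPolynomial (α ⊕ (ι × ν) ⊕ (ι × ν)) K, F ≠ 0 ∧ ∀ (a : α → K) (b c : ι → ν → K),
      eval (Sum.elim a (Sum.elim (fun q => b q.1 q.2) fun q => c q.1 q.2)) F ≠ 0 →
        Submodule.span K (Set.range b) = ⊤ ∧ Submodule.span K (Set.range c) = ⊤ := by
  obtain ⟨G, hG, span_eq_top⟩ := exists_ne_zero_forall_eval_ne_zero_span_eq_top (K := K) e
  refine ⟨rename (Sum.inr ∘ Sum.inl) G * rename (Sum.inr ∘ Sum.inr) G, mul_ne_zero ?_ ?_, ?_⟩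
  · rwa [Ne, map_eq_zero_iff _ (rename_injective _ (Sum.inr_injective.comp Sum.inl_injective))]
  · rwa [Ne, map_eq_zero_iff _ (rename_injective _ (Sum.inr_injective.comp Sum.inr_injective))]
  · intro a b c hF
    rw [map_mul, eval_rename, eval_rename] at hF
    exact ⟨span_eq_top b (left_ne_zero_of_mul hF), span_eq_top c (right_ne_zero_of_mul hF)⟩

/-- Defectivity of the Segre–Veronese variety `ℙ¹ × ℙᵐ × ℙᵐ` embedded in multidegree
`(2,1,1)`: for `m + 2 ≤ s ≤ 2m + 1` and `s` generic points of `ℙ¹ × ℙᵐ × ℙᵐ` (given by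
generic nonzero representative vectors `a i, b i, c i`), the space of multidegree
`(2,1,1)` forms whose first-order partials all vanish at the `s` points has dimension
strictly greater than `max(0, 3(m+1)² - s(2m+2))` (natural subtraction); by Terracini's
lemma the `s`-th secant variety does not have the expected dimension, i.e. the variety
is `s`-defective. -/
theorem segre_veronese_211_defective (m s : ℕ) (hm : 1 ≤ m)
    (hs1 : m + 2 ≤ s) (hs2 : s ≤ 2 * m + 1) :
    ∃ F : MvPolynomial
        ((Fin s × Fin 2) ⊕ (Fin s × Fin (m + 1)) ⊕ (Fin s × Fin (m + 1))) ℂ,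
      F ≠ 0 ∧
        ∀ (a : Fin s → Fin 2 → ℂ) (b : Fin s → Fin (m + 1) → ℂ)
          (c : Fin s → Fin (m + 1) → ℂ),
          (∀ i, a i ≠ 0) → (∀ i, b i ≠ 0) → (∀ i, c i ≠ 0) →
          MvPolynomial.eval
            (Sum.elim (fun q => a q.1 q.2)
              (Sum.elim (fun q => b q.1 q.2) (fun q => c q.1 q.2))) F ≠ 0 →
          3 * (m + 1) ^ 2 - s * (2 * m + 2) <
            Module.finrank ℂ
              ↥(forms211 m ⊓
                doublePtConditions m s fun i => Sum.elim (a i) (Sum.elim (b i) (c i))) := by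
  obtain ⟨F, hF, span_eq_top⟩ :=
    exists_ne_zero_forall_eval_ne_zero_span_eq_top_and (K := ℂ) (α := Fin s × Fin 2)
      (Fin.castLEEmb (by omega : m + 1 ≤ s))
  exact ⟨F, hF, fun a b c ha _ _ h => segre_veronese_211_defective_general hs1 hs2 ha
    (span_eq_top _ b c h).1 (span_eq_top _ b c h).2⟩

end
end
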